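/- arXiv:1606.03159 — 6 statements merged into one kernel-verified Lean document; each statement's English description precedes it below -/
import Mathlib

section
/- Let p(z) = \sum_{i=0}^n a_i z^i be a polynomial over \mathbb{C} of degree n with a_n \neq 0 and a_0 \neq 0. Then the multiset of complex roots of p (counted with multiplicity) is invariant under the inversion map z \mapsto 1/\overline{z} if and only if there exists w \in \mathbb{C} with |w| = 1 such that p(z) = w \cdot z^n \cdot \bar{p}(1/z) for every z \in \mathbb{C} \setminus \{0\}, where \bar{p}(z) = \sum_{i=0}^n \overline{a_i} z^i is the conjugate polynomial of p. -/
open Polynomial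

lemma aux_prod (s : Multiset ℂ) (hs : ∀ r ∈ s, r ≠ 0) (z : ℂ) (hz : z ≠ 0) :
    z ^ (Multiset.card s) * (s.map (fun r => z⁻¹ - (starRingEnd ℂ) r)).prod
      = (starRingEnd ℂ) ((s.map (fun r => 0 - r)).prod) *
        (s.map (fun r => z - ((starRingEnd ℂ) r)⁻¹)).prod := by
  induction s using Multiset.induction_on with
  | empty => simp
  | cons a s ih =>
    have ih' := ih (fun r hr => hs r (Multiset.mem_cons_of_mem hr))
    have ha : (starRingEnd ℂ) a ≠ 0 := by
      simpa using hs a (Multiset.mem_cons_self a s)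
    simp only [Multiset.map_cons, Multiset.prod_cons, Multiset.card_cons, map_mul, pow_succ]
    have h1 : z * (z⁻¹ - (starRingEnd ℂ) a)
        = (starRingEnd ℂ) (0 - a) * (z - ((starRingEnd ℂ) a)⁻¹) := by
      rw [zero_sub, map_neg]
      field_simp
      ring
    linear_combination (z * (z⁻¹ - (starRingEnd ℂ) a)) * ih' +
      ((starRingEnd ℂ) ((s.map (fun r => 0 - r)).prod) *
        (s.map (fun r => z - ((starRingEnd ℂ) r)⁻¹)).prod) * h1

/-- A degree-`n` polynomial over `ℂ` with nonzero constant and leading coefficients has its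
multiset of roots invariant under the inversion `z ↦ 1/conj z` iff there is a unimodular `w`
with `p(z) = w * zⁿ * conj_p(1/z)` for all `z ≠ 0`, where `conj_p` is the conjugate polynomial. -/
theorem stmt_1 (n : ℕ) (p : Polynomial ℂ) (hdeg : p.natDegree = n)
    (han : p.coeff n ≠ 0) (ha0 : p.coeff 0 ≠ 0) :
    p.roots.map (fun z => ((starRingEnd ℂ) z)⁻¹) = p.roots ↔
      ∃ w : ℂ, ‖w‖ = 1 ∧ ∀ z : ℂ, z ≠ 0 →
        p.eval z = w * z ^ n * (p.map (starRingEnd ℂ)).eval z⁻¹ := by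
  have hsp : p.Splits := IsAlgClosed.splits p
  have hlc : p.leadingCoeff = p.coeff n := by rw [← hdeg]; rfl
  have hcard : Multiset.card p.roots = n := by
    rw [← hdeg]; exact hsp.natDegree_eq_card_roots.symm
  have hne : ∀ r ∈ p.roots, r ≠ 0 := by
    rintro r hr rfl
    apply ha0
    rw [coeff_zero_eq_eval_zero]
    exact (mem_roots'.1 hr).2
  have h0 : p.coeff 0 = p.coeff n * (p.roots.map (fun r => 0 - r)).prod := by
    rw [coeff_zero_eq_eval_zero, hsp.eval_eq_prod_roots, hlc]
  set Q : ℂ[X] := ((p.roots.map (fun z => ((starRingEnd ℂ) z)⁻¹)).map (fun a => X - C a)).prod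
    with hQ
  have hQr : Q.roots = p.roots.map (fun z => ((starRingEnd ℂ) z)⁻¹) :=
    roots_multiset_prod_X_sub_C _
  have hQe : ∀ z, Q.eval z = (p.roots.map (fun r => z - ((starRingEnd ℂ) r)⁻¹)).prod := by
    intro z
    rw [hQ, eval_multiset_prod, Multiset.map_map, Multiset.map_map]
    simp [Function.comp_def]
  have key : ∀ z : ℂ, z ≠ 0 → z ^ n * (p.map (starRingEnd ℂ)).eval z⁻¹
      = (starRingEnd ℂ) (p.coeff 0) * Q.eval z := by
    intro z hz
    have h1 : (p.map (starRingEnd ℂ)).eval z⁻¹ = (starRingEnd ℂ) (p.coeff n) *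
        (p.roots.map (fun r => z⁻¹ - (starRingEnd ℂ) r)).prod := by
      rw [(IsAlgClosed.splits (p.map (starRingEnd ℂ))).eval_eq_prod_roots, hsp.roots_map,
        leadingCoeff_map, hlc, Multiset.map_map]
      rfl
    have h2 := aux_prod p.roots hne z hz
    rw [hcard] at h2
    rw [h1, hQe, h0, map_mul]
    linear_combination (starRingEnd ℂ) (p.coeff n) * h2
  have hc0 : (starRingEnd ℂ) (p.coeff 0) ≠ 0 := by simpa using ha0
  constructor
  · intro h
    have hp : p = C (p.coeff n) * Q := by
      rw [hQ, h, ← hlc]; exact hsp.eq_prod_roots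
    refine ⟨p.coeff n / (starRingEnd ℂ) (p.coeff 0), ?_, ?_⟩
    · have hP : ‖(p.roots.map (fun r => 0 - r)).prod‖ = ‖p.roots.prod‖ := by
        simp [Multiset.prod_map_neg]
      have hprod : ((starRingEnd ℂ) p.roots.prod)⁻¹ = p.roots.prod := by
        conv_rhs => rw [← h]
        rw [Multiset.prod_map_inv, map_multiset_prod]
      have hr0 : p.roots.prod ≠ 0 := by
        exact Multiset.prod_ne_zero (fun hh => hne 0 hh rfl)
      have hn : ‖p.roots.prod‖ = 1 := by
        have := congrArg norm hprod
        rw [norm_inv, RCLike.norm_conj] at this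
        have hpos : 0 < ‖p.roots.prod‖ := norm_pos_iff.2 hr0
        have h3 : ‖p.roots.prod‖ * ‖p.roots.prod‖ = 1 := by
          nth_rewrite 1 [← this]
          exact inv_mul_cancel₀ hpos.ne'
        nlinarith
      rw [norm_div, RCLike.norm_conj, h0, norm_mul, hP, hn, mul_one]
      exact div_self (norm_ne_zero_iff.2 han)
    · intro z hz
      rw [mul_assoc, key z hz]
      conv_lhs => rw [hp, eval_mul, eval_C]
      field_simp
  · rintro ⟨w, hw, hz⟩
    have hw0 : w ≠ 0 := by
      rintro rfl
      simp at hw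
    have hp : p = C (w * (starRingEnd ℂ) (p.coeff 0)) * Q := by
      apply Polynomial.eq_of_infinite_eval_eq
      refine Set.Infinite.mono (s := {0}ᶜ) ?_ (Set.finite_singleton (0 : ℂ)).infinite_compl
      intro z hz0
      have hz0' : z ≠ 0 := hz0
      show p.eval z = _
      rw [hz z hz0', mul_assoc, key z hz0', eval_mul, eval_C, mul_assoc]
    rw [← hQr]
    conv_rhs => rw [hp]
    rw [roots_C_mul _ (mul_ne_zero hw0 hc0)]
end

section
/- Let p(z) = \sum_{k=0}^n a_k z^k be a self-inversive polynomial over \mathbb{C} of degree n, and let \lambda be a natural number with \lambda < n/2. If |a_{n-\lambda}| > \tfrac{1}{2} \binom{n}{n - 2\lambda} \sum_{k=0,\, k \neq \lambda,\, k \neq n-\lambda}^{n} |a_k|, then p has exactly n - 2\lambda roots (counted with multiplicity) on the unit circle |z| = 1. -/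
open Polynomial

lemma aux_real (g g' : ℝ → ℝ) (hg : ∀ s, HasDerivAt g (g' s) s)
    (hlt : ∀ s, g s ^ 2 + g' s ^ 2 < 1) (j : ℕ) :
    ∃ s, (j * Real.pi < s ∧ s < (j + 1) * Real.pi ∧ Real.cos s + g s = 0) ∧
      ∀ t, j * Real.pi ≤ t → t ≤ (j + 1) * Real.pi → Real.cos t + g t = 0 → t = s := by
  obtain ⟨ε, hε, hcos⟩ : ∃ ε : ℝ, ε * ε = 1 ∧ ∀ x, Real.cos (x + j * Real.pi) = ε * Real.cos x := by
    refine ⟨(-1) ^ j, ?_, fun x => Real.cos_add_nat_mul_pi x j⟩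
    rw [← mul_pow]; norm_num
  have hpi := Real.pi_pos
  set h : ℝ → ℝ := fun s => -(ε * g s) with hh
  have hhd : ∀ s, HasDerivAt h (-(ε * g' s)) s := fun s => ((hg s).const_mul ε).neg
  have hsq : ∀ s, h s ^ 2 + (ε * g' s) ^ 2 < 1 := by
    intro s
    have := hlt s
    have e : h s ^ 2 + (ε * g' s) ^ 2 = (ε * ε) * (g s ^ 2 + g' s ^ 2) := by simp only [hh]; ring
    rw [e, hε]; linarith
  have hab : ∀ s, -1 < h s ∧ h s < 1 := by
    intro s
    have := hsq s
    constructor <;> nlinarith [sq_nonneg (ε * g' s), sq_nonneg (h s)]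
  have hiff : ∀ t, j * Real.pi ≤ t → t ≤ (j + 1) * Real.pi →
      (Real.cos t + g t = 0 ↔ t - j * Real.pi - Real.arccos (h t) = 0) := by
    intro t h1 h2
    have hc := hcos (t - j * Real.pi)
    rw [sub_add_cancel] at hc
    constructor
    · intro h0
      have : h t = Real.cos (t - j * Real.pi) := by
        simp only [hh]
        have : g t = -(ε * Real.cos (t - j * Real.pi)) := by linarith
        rw [this]
        linear_combination (Real.cos (t - j * Real.pi)) * hε
      rw [this, Real.arccos_cos (by linarith) (by linarith)]; ring
    · intro h0
      have : Real.cos (t - j * Real.pi) = h t := by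
        rw [sub_eq_zero] at h0
        rw [h0, Real.cos_arccos (hab t).1.le (hab t).2.le]
      rw [hc, this]; simp only [hh]
      linear_combination (- g t) * hε
  set H : ℝ → ℝ := fun s => s - j * Real.pi - Real.arccos (h s) with hH
  have hHd : ∀ s, HasDerivAt H (1 - (-(1 / √(1 - h s ^ 2)) * (-(ε * g' s)))) s := by
    intro s
    have h1 := (Real.hasDerivAt_arccos (hab s).1.ne' (hab s).2.ne).comp s (hhd s)
    exact ((hasDerivAt_id s).sub_const (j * Real.pi)).sub h1
  have hmono : StrictMono H := by
    apply strictMono_of_deriv_pos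
    intro s
    rw [(hHd s).deriv]
    have h1 := hsq s
    have hpos : 0 < √(1 - h s ^ 2) := Real.sqrt_pos.2 (by nlinarith [sq_nonneg (ε * g' s)])
    have h2 : |ε * g' s| < √(1 - h s ^ 2) := Real.lt_sqrt_of_sq_lt (by rw [sq_abs]; linarith)
    have h3 : ε * g' s < √(1 - h s ^ 2) := (le_abs_self _).trans_lt h2
    have h4 : 1 / √(1 - h s ^ 2) * (ε * g' s) < 1 := by
      rw [one_div, inv_mul_lt_iff₀ hpos]; linarith
    linarith
  have hcont : Continuous H := continuous_iff_continuousAt.2 fun s => (hHd s).continuousAt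
  have ha0 : ∀ s, 0 < Real.arccos (h s) := fun s => Real.arccos_pos.2 (hab s).2
  have ha1 : ∀ s, Real.arccos (h s) < Real.pi := by
    intro s
    refine lt_of_le_of_ne (Real.arccos_le_pi _) ?_
    rw [Ne, Real.arccos_eq_pi]
    linarith [(hab s).1]
  have hmem : (0 : ℝ) ∈ Set.Ioo (H (j * Real.pi)) (H ((j + 1) * Real.pi)) := by
    constructor
    · simp only [hH]; linarith [ha0 (j * Real.pi)]
    · simp only [hH]; linarith [ha1 ((j + 1) * Real.pi)]
  obtain ⟨s, hs, hs0⟩ := intermediate_value_Ioo (by linarith) hcont.continuousOn hmem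
  refine ⟨s, ⟨hs.1, hs.2, (hiff s hs.1.le hs.2.le).2 hs0⟩, fun t h1 h2 h3 => ?_⟩
  exact hmono.injective (((hiff t h1 h2).1 h3).trans hs0.symm)

lemma aux_real_deriv (g g' : ℝ → ℝ) (hlt : ∀ s, g s ^ 2 + g' s ^ 2 < 1) (s : ℝ)
    (h0 : Real.cos s + g s = 0) : -Real.sin s + g' s ≠ 0 := by
  intro h1
  have := hlt s
  have e1 : g s = -Real.cos s := by linarith
  have e2 : g' s = Real.sin s := by linarith
  rw [e1, e2] at this
  nlinarith [Real.sin_sq_add_cos_sq s]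

/-- counting lemma -/
lemma aux_count (q : Polynomial ℂ) (hq : q ≠ 0) (m : ℕ) (hm : 0 < m) (α : ℝ) (v : ℝ → ℂ)
    (g g' : ℝ → ℝ) (hg : ∀ s, HasDerivAt g (g' s) s)
    (hlt : ∀ s, g s ^ 2 + g' s ^ 2 < 1) (hv : ∀ s, v s ≠ 0) (hvd : Differentiable ℝ v)
    (heq : ∀ s : ℝ, ((Real.cos s + g s : ℝ) : ℂ) =
      v s * q.eval (Complex.exp ((2 * (s - α) / m : ℝ) * Complex.I))) :
    Multiset.card (q.roots.filter (fun z => ‖z‖ = 1)) = m := by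
  classical
  set Z : ℝ → ℂ := fun s => Complex.exp ((2 * (s - α) / m : ℝ) * Complex.I) with hZ
  have hpi := Real.pi_pos
  have hm' : (0 : ℝ) < m := by exact_mod_cast hm
  have hroot : ∀ s, Real.cos s + g s = 0 ↔ q.eval (Z s) = 0 := by
    intro s
    have := heq s
    constructor
    · intro h
      rw [h] at this
      rw [Complex.ofReal_zero] at this
      exact (mul_eq_zero.1 this.symm).resolve_left (hv s)
    · intro h
      have h' := h
      simp only [hZ] at h'
      rw [h', mul_zero] at this
      exact_mod_cast this
  -- every unit number is Z s with s in [0, m π)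
  have hsurj : ∀ z : ℂ, ‖z‖ = 1 → ∃ s : ℝ, 0 ≤ s ∧ s < m * Real.pi ∧ Z s = z := by
    intro z hz
    have hp : 0 < m * Real.pi := by positivity
    set s0 : ℝ := m * z.arg / 2 + α with hs0
    have h1 := toIcoMod_mem_Ico hp 0 s0
    refine ⟨toIcoMod hp 0 s0, h1.1, by simpa using h1.2, ?_⟩
    have h2 : toIcoMod hp 0 s0 = s0 - toIcoDiv hp 0 s0 * (m * Real.pi) := by
      rw [toIcoMod, zsmul_eq_mul]
    have h3 : ((2 * (toIcoMod hp 0 s0 - α) / m : ℝ) : ℂ) * Complex.I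
        = z.arg * Complex.I - (toIcoDiv hp 0 s0 : ℤ) * (2 * Real.pi * Complex.I) := by
      rw [h2, hs0]
      have : (m : ℂ) ≠ 0 := by exact_mod_cast hm.ne'
      push_cast
      field_simp
      ring
    simp only [hZ]
    rw [h3, Complex.exp_sub, Complex.exp_int_mul_two_pi_mul_I, div_one]
    have := Complex.norm_mul_exp_arg_mul_I z
    rw [hz] at this
    simpa using this
  have hnorm : ∀ s, ‖Z s‖ = 1 := fun s => Complex.norm_exp_ofReal_mul_I _
  have hinj : ∀ s t : ℝ, 0 ≤ s → s < m * Real.pi → 0 ≤ t → t < m * Real.pi → Z s = Z t → s = t := by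
    intro s t hs1 hs2 ht1 ht2 h
    obtain ⟨k, hk⟩ := Complex.exp_eq_exp_iff_exists_int.1 h
    have hk' : 2 * (s - α) / m = 2 * (t - α) / m + k * (2 * Real.pi) := by
      have : ((2 * (s - α) / m : ℝ) : ℂ) * Complex.I
        = ((2 * (t - α) / m + k * (2 * Real.pi) : ℝ) : ℂ) * Complex.I := by
        rw [hk]; push_cast; ring
      exact_mod_cast mul_right_cancel₀ Complex.I_ne_zero this
    have hk2 : s - t = k * (m * Real.pi) := by
      field_simp at hk'
      linarith
    have hp : 0 < m * Real.pi := by positivity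
    have h1 : (k : ℝ) < 1 := by
      by_contra hc
      push Not at hc
      nlinarith
    have h2 : (-1 : ℝ) < k := by
      by_contra hc
      push Not at hc
      nlinarith
    have h3 : k = 0 := by
      have h1' : k < 1 := by exact_mod_cast h1
      have h2' : -1 < k := by exact_mod_cast h2
      omega
    rw [h3] at hk2
    simp at hk2
    linarith
  choose S hS hSu using aux_real g g' hg hlt
  have hSb : ∀ j, j < m → 0 ≤ S j ∧ S j < m * Real.pi := by
    intro j hj
    have h1 : ((j : ℝ) + 1) ≤ m := by exact_mod_cast hj
    have h2 := hS j
    refine ⟨le_trans (by positivity) h2.1.le, h2.2.1.trans_le ?_⟩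
    gcongr
  have hSmono : StrictMono S := by
    apply strictMono_nat_of_lt_succ
    intro j
    have h1 := (hS j).2.1
    have h2 := (hS (j + 1)).1
    push_cast at h2
    linarith
  have himg : (q.roots.filter (fun z => ‖z‖ = 1)).toFinset = (Finset.range m).image (fun j => Z (S j)) := by
    ext z
    simp only [Multiset.mem_toFinset, Multiset.mem_filter, mem_roots hq, IsRoot.def, Finset.mem_image,
      Finset.mem_range]
    constructor
    · rintro ⟨h0, h1⟩
      obtain ⟨s, hs1, hs2, rfl⟩ := hsurj z h1
      have hfl := Nat.floor_le (show 0 ≤ s / Real.pi by positivity)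
      have hfl2 := Nat.lt_floor_add_one (s / Real.pi)
      rw [le_div_iff₀ hpi] at hfl
      rw [div_lt_iff₀ hpi] at hfl2
      refine ⟨⌊s / Real.pi⌋₊, ?_, ?_⟩
      · rw [Nat.floor_lt (by positivity), div_lt_iff₀ hpi]
        exact hs2
      · rw [← hSu _ s hfl hfl2.le ((hroot s).2 h0)]
    · rintro ⟨j, hj, rfl⟩
      exact ⟨(hroot _).1 (hS j).2.2, hnorm _⟩
  have hnodup : (q.roots.filter (fun z => ‖z‖ = 1)).Nodup := by
    rw [Multiset.nodup_iff_count_le_one]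
    intro z
    by_cases hz : ‖z‖ = 1
    · rw [Multiset.count_filter_of_pos (p := fun z : ℂ => ‖z‖ = 1) hz, count_roots]
      by_contra hc
      push Not at hc
      rw [one_lt_rootMultiplicity_iff_isRoot hq] at hc
      obtain ⟨s, -, -, rfl⟩ := hsurj z hz
      have h0 := (hroot s).2 hc.1
      apply aux_real_deriv g g' hlt s h0
      have hd1 : HasDerivAt (fun s : ℝ => ((Real.cos s + g s : ℝ) : ℂ)) ((-Real.sin s + g' s : ℝ) : ℂ) s :=
        ((Real.hasDerivAt_cos s).add (hg s)).ofReal_comp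
      have hZd : DifferentiableAt ℝ Z s := by
        simp only [hZ]
        have : DifferentiableAt ℝ (fun s : ℝ => (2 * (s - α) / m : ℝ)) s := by fun_prop
        exact ((this.hasDerivAt.ofReal_comp).mul_const Complex.I).cexp.differentiableAt
      have hd2 : HasDerivAt (fun s : ℝ => q.eval (Z s)) (q.derivative.eval (Z s) * deriv Z s) s :=
        (q.hasDerivAt (Z s)).comp s hZd.hasDerivAt
      have hd3 := (hvd s).hasDerivAt.mul hd2
      have he : (fun s : ℝ => ((Real.cos s + g s : ℝ) : ℂ)) = (v * fun s : ℝ => q.eval (Z s)) := by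
        funext s; exact heq s
      rw [he] at hd1
      have := hd1.unique hd3
      have h1 : q.eval (Z s) = 0 := hc.1
      have h2 : q.derivative.eval (Z s) = 0 := hc.2
      rw [h1, h2] at this
      simp only [mul_zero, zero_mul, add_zero] at this
      exact_mod_cast this
    · rw [Multiset.count_eq_zero_of_notMem]
      · exact zero_le_one
      · simp [hz]
  rw [← Multiset.toFinset_card_of_nodup hnodup, himg, Finset.card_image_of_injOn, Finset.card_range]
  intro i hi j hj hij
  simp only [Finset.coe_range, Set.mem_Iio] at hi hj
  exact hSmono.injective (hinj _ _ (hSb i hi).1 (hSb i hi).2 (hSb j hj).1 (hSb j hj).2 hij)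

/-- trigonometric part -/
lemma aux_trig (n m : ℕ) (hm : 0 < m) (hmn : m ≤ n) (b : ℕ → ℂ) (T : Finset ℕ)
    (hT : ∀ k ∈ T, k ≤ n) (hT' : ∀ k ∈ T, n - k ∈ T)
    (hb : ∀ k ∈ T, b (n - k) = (starRingEnd ℂ) (b k)) (A : ℝ) (hA : 0 < A)
    (hS : n * ∑ k ∈ T, ‖b k‖ < 2 * A * m) (α : ℝ) :
    ∃ g g' : ℝ → ℝ, (∀ s, HasDerivAt g (g' s) s) ∧ (∀ s, g s ^ 2 + g' s ^ 2 < 1) ∧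
      ∀ s : ℝ, ((2 * A * g s : ℝ) : ℂ) =
        ∑ k ∈ T, b k * Complex.exp (((2 * k - n) * (s - α) / m : ℝ) * Complex.I) := by
  have hm' : (0 : ℝ) < m := by exact_mod_cast hm
  have hrefl : ∀ {M : Type} [AddCommMonoid M] (f : ℕ → M), ∑ k ∈ T, f (n - k) = ∑ k ∈ T, f k := by
    intro M _ f
    refine Finset.sum_nbij' (fun k => n - k) (fun k => n - k) hT' hT' ?_ ?_ ?_
    · intro k hk; have := hT k hk; omega
    · intro k hk; have := hT k hk; omega
    · intro k hk; rfl
  set e : ℕ → ℝ → ℂ := fun k s => Complex.exp (((2 * k - n) * (s - α) / m : ℝ) * Complex.I) with he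
  have hen : ∀ k s, ‖e k s‖ = 1 := fun k s => Complex.norm_exp_ofReal_mul_I _
  set G : ℝ → ℂ := fun s => ∑ k ∈ T, b k * e k s with hG
  set G' : ℝ → ℂ := fun s => ∑ k ∈ T, b k * (e k s * (((2 * k - n) / m : ℝ) * Complex.I)) with hG'
  have hGd : ∀ s, HasDerivAt G (G' s) s := by
    intro s
    apply HasDerivAt.fun_sum
    intro k hk
    apply HasDerivAt.const_mul
    have h1 : HasDerivAt (fun s : ℝ => (2 * k - n) * (s - α) / m) ((2 * k - n) / m : ℝ) s := by
      have := (((hasDerivAt_id s).sub_const α).const_mul (2 * (k : ℝ) - n)).div_const (m : ℝ)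
      simpa using this
    exact (h1.ofReal_comp.mul_const Complex.I).cexp
  have hec : ∀ k ∈ T, ∀ s, e (n - k) s = (starRingEnd ℂ) (e k s) := by
    intro k hk s
    simp only [he]
    rw [← Complex.exp_conj]
    congr 1
    simp only [map_mul, Complex.conj_ofReal, Complex.conj_I]
    rw [Nat.cast_sub (hT k hk)]
    push_cast
    ring
  have hGreal : ∀ s, (starRingEnd ℂ) (G s) = G s := by
    intro s
    simp only [hG]
    rw [map_sum]
    refine Eq.trans ?_ (hrefl (fun k => b k * e k s))
    apply Finset.sum_congr rfl
    intro k hk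
    rw [hb k hk, hec k hk, map_mul]
  have hG'real : ∀ s, (starRingEnd ℂ) (G' s) = G' s := by
    intro s
    simp only [hG']
    rw [map_sum]
    refine Eq.trans ?_ (hrefl (fun k => b k * (e k s * (((2 * k - n) / m : ℝ) * Complex.I))))
    apply Finset.sum_congr rfl
    intro k hk
    rw [hb k hk, hec k hk, Nat.cast_sub (hT k hk)]
    simp only [map_mul, Complex.conj_ofReal, Complex.conj_I]
    push_cast
    ring
  have hGre : ∀ s, ((G s).re : ℂ) = G s := fun s => Complex.conj_eq_iff_re.1 (hGreal s)
  have hG're : ∀ s, ((G' s).re : ℂ) = G' s := fun s => Complex.conj_eq_iff_re.1 (hG'real s)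
  have hkey : ∀ s, (G s).re ^ 2 + (G' s).re ^ 2 < (2 * A) ^ 2 := by
    intro s
    have hP : (((n / m : ℝ) * (G s).re : ℝ) : ℂ) + ((-(G' s).re : ℝ) : ℂ) * Complex.I
        = ∑ k ∈ T, ((2 * k / m : ℝ) : ℂ) * (b k * e k s) := by
      rw [Complex.ofReal_mul, Complex.ofReal_neg, hGre, hG're]
      simp only [hG, hG']
      rw [Finset.mul_sum, ← Finset.sum_neg_distrib, Finset.sum_mul, ← Finset.sum_add_distrib]
      apply Finset.sum_congr rfl
      intro k hk
      push_cast
      linear_combination (-(b k * e k s * ((2 * k - n) / m))) * Complex.I_sq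
    have hn : ‖∑ k ∈ T, ((2 * k / m : ℝ) : ℂ) * (b k * e k s)‖ ≤ ∑ k ∈ T, (2 * k / m : ℝ) * ‖b k‖ := by
      refine (norm_sum_le _ _).trans (Finset.sum_le_sum fun k hk => ?_)
      rw [norm_mul, norm_mul, hen, mul_one, Complex.norm_real, Real.norm_of_nonneg (by positivity)]
    have hsum : ∑ k ∈ T, (2 * k / m : ℝ) * ‖b k‖ = n * (∑ k ∈ T, ‖b k‖) / m := by
      have h1 := hrefl (fun k => (k : ℝ) * ‖b k‖)
      have h2 : ∑ k ∈ T, ((n - k : ℕ) : ℝ) * ‖b (n - k)‖ = n * (∑ k ∈ T, ‖b k‖) - ∑ k ∈ T, (k : ℝ) * ‖b k‖ := by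
        rw [Finset.mul_sum, ← Finset.sum_sub_distrib]
        apply Finset.sum_congr rfl
        intro k hk
        rw [hb k hk, Nat.cast_sub (hT k hk), RCLike.norm_conj]
        ring
      have h3 : ∑ k ∈ T, (2 * k / m : ℝ) * ‖b k‖ = 2 / m * ∑ k ∈ T, (k : ℝ) * ‖b k‖ := by
        rw [Finset.mul_sum]
        apply Finset.sum_congr rfl
        intro k hk
        ring
      rw [h3]
      field_simp
      linarith
    have hlt : n * (∑ k ∈ T, ‖b k‖) / m < 2 * A := by
      rw [div_lt_iff₀ hm']; exact hS
    have hfin : ‖(((n / m : ℝ) * (G s).re : ℝ) : ℂ) + ((-(G' s).re : ℝ) : ℂ) * Complex.I‖ < 2 * A := by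
      rw [hP]; linarith
    have hsq : ((n / m : ℝ) * (G s).re) ^ 2 + (-(G' s).re) ^ 2 < (2 * A) ^ 2 := by
      have h1 := Complex.normSq_add_mul_I ((n / m : ℝ) * (G s).re) (-(G' s).re)
      rw [← h1, Complex.normSq_eq_norm_sq]
      exact pow_lt_pow_left₀ hfin (norm_nonneg _) two_ne_zero
    have hr : (1 : ℝ) ≤ n / m := by
      rw [le_div_iff₀ hm', one_mul]; exact_mod_cast hmn
    have hr2 : (1 : ℝ) ≤ (n / m) ^ 2 := one_le_pow₀ hr
    rw [mul_pow] at hsq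
    nlinarith [sq_nonneg (G s).re]
  refine ⟨fun s => (G s).re / (2 * A), fun s => (G' s).re / (2 * A), ?_, ?_, ?_⟩
  · intro s
    have h1 : HasDerivAt (fun s => (G s).re) (G' s).re s :=
      Complex.reCLM.hasFDerivAt.comp_hasDerivAt s (hGd s)
    exact h1.div_const _
  · intro s
    have := hkey s
    simp only [div_pow]
    rw [← add_div, div_lt_one (by positivity)]
    exact this
  · intro s
    have : 2 * A * ((G s).re / (2 * A)) = (G s).re := by field_simp
    simp only [this]
    exact hGre s

open scoped Classical in
/-- If `p` is a self-inversive polynomial of degree `n` and `λ < n/2` with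
`|a_{n-λ}| > (1/2) C(n, n-2λ) ∑_{k ≠ λ, n-λ} |aₖ|`, then `p` has exactly `n - 2λ` roots
(with multiplicity) on the unit circle. -/
theorem stmt_5 (n lam : ℕ) (p : Polynomial ℂ) (hdeg : p.natDegree = n) (han : p.coeff n ≠ 0)
    (hlam : 2 * lam < n)
    (hsi : ∃ w : ℂ, ‖w‖ = 1 ∧
      ∀ j ≤ n, p.coeff j = w * (starRingEnd ℂ) (p.coeff (n - j)))
    (hbig : ‖p.coeff (n - lam)‖ >
      (1 / 2) * (n.choose (n - 2 * lam)) *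
        ∑ k ∈ (Finset.range (n + 1)).filter (fun k => k ≠ lam ∧ k ≠ n - lam),
          ‖p.coeff k‖) :
    Multiset.card (p.roots.filter (fun z => ‖z‖ = 1)) = n - 2 * lam := by
  obtain ⟨w, hw, hsi⟩ := hsi
  obtain ⟨u, hu⟩ := IsSquare.exists_sq w (IsAlgClosed.exists_eq_mul_self w)
  have hun : ‖u‖ = 1 := by
    have : ‖u‖ ^ 2 = 1 := by rw [← norm_pow, ← hu, hw]
    exact (pow_eq_one_iff_of_nonneg (norm_nonneg _) two_ne_zero).1 this
  have huu : (starRingEnd ℂ) u * u = 1 := by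
    rw [Complex.conj_mul', hun]; norm_num
  have hu0 : (starRingEnd ℂ) u ≠ 0 := left_ne_zero_of_mul_eq_one huu
  set m := n - 2 * lam with hmdef
  have hm : 0 < m := by omega
  set T := (Finset.range (n + 1)).filter (fun k => k ≠ lam ∧ k ≠ n - lam) with hT
  set b : ℕ → ℂ := fun k => (starRingEnd ℂ) u * p.coeff k with hb
  have hbn : ∀ k, ‖b k‖ = ‖p.coeff k‖ := by
    intro k; simp [hb, hun]
  have hbc : ∀ k ≤ n, b (n - k) = (starRingEnd ℂ) (b k) := by
    intro k hk
    simp only [hb]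
    rw [hsi (n - k) (Nat.sub_le _ _), Nat.sub_sub_self hk, hu, map_mul, Complex.conj_conj]
    linear_combination (u * (starRingEnd ℂ) (p.coeff k)) * huu
  set A := ‖b (n - lam)‖ with hAdef
  set S := ∑ k ∈ T, ‖b k‖ with hSdef
  have hS0 : 0 ≤ S := Finset.sum_nonneg fun k _ => norm_nonneg _
  have hbig' : (1 / 2) * (n.choose m : ℝ) * S < A := by
    rw [hAdef, hSdef, hbn]
    simp only [hbn]
    exact hbig
  have hA : 0 < A := lt_of_le_of_lt (by positivity) hbig'
  have hch : (n : ℝ) ≤ n.choose m * m := by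
    have h1 := Nat.add_one_mul_choose_eq (n - 1) (m - 1)
    rw [Nat.sub_add_cancel (by omega), Nat.sub_add_cancel (by omega)] at h1
    have h2 : 0 < (n - 1).choose (m - 1) := Nat.choose_pos (by omega)
    have h3 : n ≤ n.choose m * m := by
      rw [← h1]; exact Nat.le_mul_of_pos_right _ h2
    exact_mod_cast h3
  have hm' : (0 : ℝ) < m := by exact_mod_cast hm
  have hS : n * S < 2 * A * m := by
    have h1 : n * S ≤ n.choose m * m * S := by gcongr
    nlinarith
  set α := (b (n - lam)).arg with hα
  obtain ⟨g, g', hg, hlt, hgG⟩ := aux_trig n m hm (by omega) b T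
    (fun k hk => by simp [hT] at hk; omega) (fun k hk => by simp [hT] at hk ⊢; omega)
    (fun k hk => hbc k (by simp [hT] at hk; omega)) A hA hS α
  have hp0 : p ≠ 0 := by rintro rfl; simp at han
  refine aux_count p hp0 m hm α
    (fun s => (1 / (2 * A) : ℝ) * (starRingEnd ℂ) u * Complex.exp ((-(n * (s - α) / m) : ℝ) * Complex.I))
    g g' hg hlt ?_ ?_ ?_
  · intro s
    refine mul_ne_zero (mul_ne_zero ?_ hu0) (Complex.exp_ne_zero _)
    exact_mod_cast (by positivity : (1 / (2 * A) : ℝ) ≠ 0)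
  · intro s
    have : DifferentiableAt ℝ (fun s : ℝ => (-(n * (s - α) / m) : ℝ)) s := by fun_prop
    exact (((this.hasDerivAt.ofReal_comp).mul_const Complex.I).cexp.const_mul _).differentiableAt
  · intro s
    set e : ℕ → ℂ := fun k => Complex.exp (((2 * k - n) * (s - α) / m : ℝ) * Complex.I) with he
    have hev : (starRingEnd ℂ) u * Complex.exp ((-(n * (s - α) / m) : ℝ) * Complex.I) *
        p.eval (Complex.exp ((2 * (s - α) / m : ℝ) * Complex.I)) = ∑ k ∈ Finset.range (n + 1), b k * e k := by
      rw [eval_eq_sum_range, hdeg, Finset.mul_sum]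
      apply Finset.sum_congr rfl
      intro k _
      have : e k = Complex.exp ((-(n * (s - α) / m) : ℝ) * Complex.I) *
          Complex.exp ((2 * (s - α) / m : ℝ) * Complex.I) ^ k := by
        rw [← Complex.exp_nat_mul, ← Complex.exp_add]
        simp only [he]
        congr 1
        push_cast
        ring
      rw [this]
      simp only [hb]
      ring
    have hsplit : ∑ k ∈ Finset.range (n + 1), b k * e k = ∑ k ∈ T, b k * e k +
        (b lam * e lam + b (n - lam) * e (n - lam)) := by
      rw [← Finset.sum_filter_add_sum_filter_not (Finset.range (n + 1)) (fun k => k ≠ lam ∧ k ≠ n - lam)]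
      congr 1
      have : (Finset.range (n + 1)).filter (fun k => ¬ (k ≠ lam ∧ k ≠ n - lam)) = {lam, n - lam} := by
        ext k
        simp only [Finset.mem_filter, Finset.mem_range, Finset.mem_insert, Finset.mem_singleton]
        omega
      rw [this, Finset.sum_pair (by omega)]
    have hmc : (m : ℂ) ≠ 0 := by exact_mod_cast hm.ne'
    have hmn : (n : ℝ) = m + 2 * lam := by
      have : n = m + 2 * lam := by omega
      exact_mod_cast this
    have h1 : b (n - lam) * e (n - lam) = A * Complex.exp (s * Complex.I) := by
      rw [← Complex.norm_mul_exp_arg_mul_I (b (n - lam)), ← hα, ← hAdef, mul_assoc]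
      congr 1
      simp only [he]
      rw [← Complex.exp_add, Nat.cast_sub (by omega), hmn]
      congr 1
      push_cast
      field_simp
      ring
    have h2 : b lam * e lam = (starRingEnd ℂ) (A * Complex.exp (s * Complex.I)) := by
      rw [← h1, map_mul, ← hbc (n - lam) (Nat.sub_le _ _), Nat.sub_sub_self (by omega)]
      congr 1
      simp only [he]
      rw [← Complex.exp_conj]
      congr 1
      simp only [map_mul, Complex.conj_ofReal, Complex.conj_I]
      have hc : ((n - lam : ℕ) : ℝ) = n - lam := Nat.cast_sub (by omega)
      rw [hc]
      push_cast
      ring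
    have h3 : b lam * e lam + b (n - lam) * e (n - lam) = 2 * A * Complex.cos s := by
      rw [h2, h1, map_mul, ← Complex.exp_conj]
      simp only [map_mul, Complex.conj_ofReal, Complex.conj_I, Complex.cos]
      rw [mul_neg, neg_mul]
      ring
    have h4 := hgG s
    rw [h3, ← h4] at hsplit
    rw [hsplit] at hev
    rw [mul_assoc, mul_assoc, ← mul_assoc ((starRingEnd ℂ) u), hev]
    have hAc : (A : ℂ) ≠ 0 := by exact_mod_cast hA.ne'
    push_cast
    field_simp
    ring
end

section
/- Let p(z) = \sum_{k=0}^n a_k z^k be a self-inversive polynomial over \mathbb{C} of even degree n. If |a_{n/2}| > 2 \sum_{k=0,\, k \neq n/2}^{n} |a_k|, then p has no roots on the unit circle |z| = 1. -/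
open Polynomial

/-- If `p` is a self-inversive polynomial of even degree `n` with
`|a_{n/2}| > 2 ∑_{k ≠ n/2} |aₖ|`, then `p` has no roots on the unit circle. -/
theorem stmt_6 (n : ℕ) (p : Polynomial ℂ) (hdeg : p.natDegree = n) (han : p.coeff n ≠ 0)
    (hn : Even n)
    (hsi : ∃ w : ℂ, ‖w‖ = 1 ∧
      ∀ j ≤ n, p.coeff j = w * (starRingEnd ℂ) (p.coeff (n - j)))
    (hbig : ‖p.coeff (n / 2)‖ >
      2 * ∑ k ∈ (Finset.range (n + 1)).filter (fun k => k ≠ n / 2),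
        ‖p.coeff k‖) :
    ∀ z : ℂ, ‖z‖ = 1 → p.eval z ≠ 0 := by
  intro z hz h0
  rw [Polynomial.eval_eq_sum_range, hdeg,
    ← Finset.sum_filter_add_sum_filter_not _ (fun k => k ≠ n / 2)] at h0
  have h1 : (Finset.range (n + 1)).filter (fun k => ¬ k ≠ n / 2) = {n / 2} := by
    ext k
    simp only [Finset.mem_filter, Finset.mem_range, Finset.mem_singleton, not_not]
    omega
  rw [h1, Finset.sum_singleton] at h0
  have h2 : ‖p.coeff (n / 2)‖ ≤
      ∑ k ∈ (Finset.range (n + 1)).filter (fun k => k ≠ n / 2), ‖p.coeff k‖ := by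
    calc ‖p.coeff (n / 2)‖ = ‖p.coeff (n / 2) * z ^ (n / 2)‖ := by simp [hz]
      _ = ‖∑ k ∈ (Finset.range (n + 1)).filter (fun k => k ≠ n / 2), p.coeff k * z ^ k‖ := by
        rw [eq_neg_of_add_eq_zero_right h0, norm_neg]
      _ ≤ ∑ k ∈ (Finset.range (n + 1)).filter (fun k => k ≠ n / 2), ‖p.coeff k * z ^ k‖ :=
        norm_sum_le _ _
      _ = _ := by simp [hz]
  have h3 : 0 ≤ ∑ k ∈ (Finset.range (n + 1)).filter (fun k => k ≠ n / 2), ‖p.coeff k‖ :=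
    Finset.sum_nonneg fun _ _ => norm_nonneg _
  linarith
end

section
/- Let p(z) = \sum_{k=0}^n a_k z^k be a self-inversive polynomial over \mathbb{C} of degree n which is squarefree (equivalently, has non-zero discriminant, i.e. no repeated roots). If |a_n| \ge \tfrac{1}{2} \sum_{k=1}^{n} |a_k|, then all roots of p lie on the unit circle |z| = 1. -/
open Polynomial

lemma aux_factor (z r : ℂ) (hz : 1 < ‖z‖) (hr : ‖r‖ < 1) :
    ‖z‖ * ‖((starRingEnd ℂ) z)⁻¹ - r‖ < ‖z - r‖ := by
  have hz0 : z ≠ 0 := by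
    rintro rfl
    simp at hz
    linarith
  have hc0 : (starRingEnd ℂ) z ≠ 0 := by simpa using hz0
  have h1 : ‖z‖ * ‖((starRingEnd ℂ) z)⁻¹ - r‖ = ‖1 - (starRingEnd ℂ) z * r‖ := by
    rw [← Complex.norm_conj z, ← norm_mul, mul_sub, mul_inv_cancel₀ hc0]
  rw [h1]
  apply lt_of_pow_lt_pow_left₀ 2 (norm_nonneg _)
  have hz2 : 1 < ‖z‖ ^ 2 := by nlinarith
  have hr2 : ‖r‖ ^ 2 < 1 := by nlinarith [norm_nonneg r]
  rw [Complex.sq_norm, Complex.normSq_apply] at *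
  simp only [Complex.sub_re, Complex.sub_im, Complex.mul_re, Complex.mul_im, Complex.conj_re,
    Complex.conj_im, Complex.one_re, Complex.one_im] at *
  rw [Complex.sq_norm, Complex.normSq_apply] at *
  simp only [Complex.sub_re, Complex.sub_im]
  nlinarith [mul_pos (sub_pos.2 hz2) (sub_pos.2 hr2)]

lemma aux_prod_le (z : ℂ) (hz : 1 < ‖z‖) (s : Multiset ℂ) (hs : ∀ r ∈ s, ‖r‖ < 1) :
    0 < ‖(s.map (fun r => z - r)).prod‖ ∧
    ‖z‖ ^ s.card * ‖(s.map (fun r => ((starRingEnd ℂ) z)⁻¹ - r)).prod‖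
      ≤ ‖(s.map (fun r => z - r)).prod‖ ∧
    (s ≠ 0 → ‖z‖ ^ s.card * ‖(s.map (fun r => ((starRingEnd ℂ) z)⁻¹ - r)).prod‖
      < ‖(s.map (fun r => z - r)).prod‖) := by
  induction s using Multiset.induction_on with
  | empty => simp
  | cons r s ih =>
    obtain ⟨ih0, ih1, -⟩ := ih (fun x hx => hs x (Multiset.mem_cons_of_mem hx))
    have h := aux_factor z r hz (hs r (Multiset.mem_cons_self r s))
    have hpos : 0 < ‖z - r‖ := lt_of_le_of_lt (by positivity) h
    have key : ‖z‖ ^ (r ::ₘ s).card *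
        ‖((r ::ₘ s).map (fun r => ((starRingEnd ℂ) z)⁻¹ - r)).prod‖
        < ‖((r ::ₘ s).map (fun r => z - r)).prod‖ := by
      simp only [Multiset.map_cons, Multiset.prod_cons, norm_mul, Multiset.card_cons, pow_succ]
      calc _ = (‖z‖ * ‖((starRingEnd ℂ) z)⁻¹ - r‖) * (‖z‖ ^ s.card *
            ‖(s.map (fun r => ((starRingEnd ℂ) z)⁻¹ - r)).prod‖) := by ring
        _ ≤ (‖z‖ * ‖((starRingEnd ℂ) z)⁻¹ - r‖) * ‖(s.map (fun r => z - r)).prod‖ := by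
            gcongr
        _ < _ := by gcongr
    refine ⟨?_, key.le, fun _ => key⟩
    simp only [Multiset.map_cons, Multiset.prod_cons, norm_mul]
    positivity

lemma aux_poly (q : ℂ[X]) (hn : q.natDegree ≠ 0) (hq : ∀ r, q.eval r = 0 → ‖r‖ < 1)
    (z : ℂ) (hz : 1 < ‖z‖) :
    ‖z‖ ^ q.natDegree * ‖q.eval (((starRingEnd ℂ) z)⁻¹)‖ < ‖q.eval z‖ := by
  have hs : q.Splits := IsAlgClosed.splits q
  have hq0 : q ≠ 0 := by
    rintro rfl
    simp at hn
  have hcard : q.natDegree = q.roots.card := hs.natDegree_eq_card_roots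
  have hev : ∀ x, q.eval x = q.leadingCoeff * (q.roots.map (fun r => x - r)).prod :=
    fun x => hs.eval_eq_prod_roots x
  have hne : q.roots ≠ 0 := by
    intro h
    rw [h] at hcard
    exact hn (by simpa using hcard)
  have := (aux_prod_le z hz q.roots
    (fun r hr => hq r ((mem_roots hq0).1 hr))).2.2 hne
  rw [hev, hev, hcard, norm_mul, norm_mul]
  have hl : 0 < ‖q.leadingCoeff‖ := by simpa using hq0
  nlinarith [mul_lt_mul_of_pos_left this hl]

/-- (Lakatos–Losonczi) A squarefree self-inversive polynomial of degree `n` with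
`|aₙ| ≥ (1/2) ∑_{k=1}^{n} |aₖ|` has all its roots on the unit circle. -/
theorem stmt_7 (n : ℕ) (p : Polynomial ℂ) (hdeg : p.natDegree = n) (han : p.coeff n ≠ 0)
    (hsq : Squarefree p)
    (hsi : ∃ w : ℂ, ‖w‖ = 1 ∧
      ∀ j ≤ n, p.coeff j = w * (starRingEnd ℂ) (p.coeff (n - j)))
    (hbig : ‖p.coeff n‖ ≥
      (1 / 2) * ∑ k ∈ Finset.Icc 1 n, ‖p.coeff k‖) :
    ∀ z : ℂ, p.eval z = 0 → ‖z‖ = 1 := by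
  intro z hz
  obtain ⟨w, hw, hsi⟩ := hsi
  have hw0 : w ≠ 0 := by
    rintro rfl
    simp at hw
  rcases Nat.eq_zero_or_pos n with hn | hn
  · subst hn
    rw [eq_C_of_natDegree_eq_zero hdeg] at hz
    simp at hz
    exact absurd hz han
  have ha0 : p.coeff 0 ≠ 0 := by
    rw [hsi 0 (Nat.zero_le _)]
    simpa [hw0] using han
  have hz0 : z ≠ 0 := by
    rintro rfl
    rw [← coeff_zero_eq_eval_zero] at hz
    exact ha0 hz
  obtain ⟨c, hc⟩ : ∃ c : ℕ → ℂ, c = fun k => if k = n then p.coeff n else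
    if k = 0 then 0 else p.coeff k / 2 := ⟨_, rfl⟩
  have hcn : c n = p.coeff n := by simp [hc]
  have hc0 : c 0 = 0 := by simp [hc, hn.ne]
  have hck : ∀ k, k ≠ 0 → k ≠ n → c k = p.coeff k / 2 := by
    intro k h1 h2
    simp [hc, h1, h2]
  have hrel : ∀ k ≤ n, p.coeff k = c k + w * (starRingEnd ℂ) (c (n - k)) := by
    intro k hk
    by_cases h0 : k = 0
    · subst h0
      simpa [hc0, hcn] using hsi 0 hk
    by_cases h1 : k = n
    · subst h1
      simp [hc0, hcn]
    rw [hck k h0 h1, hck (n - k) (by omega) (by omega), map_div₀, map_ofNat]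
    have := hsi k hk
    linear_combination (1 / 2 : ℂ) * this
  obtain ⟨q, hqdef⟩ : ∃ q : ℂ[X], q = ∑ k ∈ Finset.range (n + 1), C (c k) * X ^ k := ⟨_, rfl⟩
  have hqev : ∀ x, q.eval x = ∑ k ∈ Finset.range (n + 1), c k * x ^ k := by
    intro x
    simp [hqdef, eval_finsetSum]
  have hqcoeff : q.coeff n = p.coeff n := by
    rw [hqdef, finsetSum_coeff]
    simp [coeff_C_mul, coeff_X_pow, hcn]
  have hqdeg : q.natDegree = n := by
    apply le_antisymm
    · rw [hqdef]
      apply natDegree_sum_le_of_forall_le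
      intro k hk
      refine (natDegree_C_mul_X_pow_le _ _).trans ?_
      have := Finset.mem_range.1 hk
      omega
    · exact le_natDegree_of_ne_zero (hqcoeff ▸ han)
  have hS : ∑ k ∈ Finset.range n, ‖c k‖ ≤ ‖p.coeff n‖ / 2 := by
    obtain ⟨m, rfl⟩ : ∃ m, n = m + 1 := ⟨n - 1, by omega⟩
    rw [Finset.sum_range_succ', hc0]
    have h1 : ∑ k ∈ Finset.Icc 1 (m + 1), ‖p.coeff k‖ =
        ∑ k ∈ Finset.range (m + 1), ‖p.coeff (k + 1)‖ := by
      rw [Finset.range_eq_Ico, Finset.sum_Ico_add' (fun k => ‖p.coeff k‖) 0 (m + 1) 1]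
      rfl
    rw [h1, Finset.sum_range_succ] at hbig
    have h2 : ∑ k ∈ Finset.range m, ‖c (k + 1)‖ =
        (∑ k ∈ Finset.range m, ‖p.coeff (k + 1)‖) / 2 := by
      rw [Finset.sum_div]
      apply Finset.sum_congr rfl
      intro k hk
      have := Finset.mem_range.1 hk
      rw [hck (k + 1) (by omega) (by omega)]
      simp
    rw [h2]
    simp only [norm_zero]
    linarith
  have hpos : 0 < ‖p.coeff n‖ := norm_pos_iff.2 han
  have hroots : ∀ r, q.eval r = 0 → ‖r‖ < 1 := by
    intro r hr
    by_contra hlt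
    have hr1 : 1 ≤ ‖r‖ := not_lt.1 hlt
    rw [hqev, Finset.sum_range_succ, hcn] at hr
    have h1 : p.coeff n * r ^ n = - ∑ k ∈ Finset.range n, c k * r ^ k := by
      linear_combination hr
    have h2 : ‖p.coeff n‖ * ‖r‖ ^ n ≤ (∑ k ∈ Finset.range n, ‖c k‖) * ‖r‖ ^ n := by
      rw [← norm_pow, ← norm_mul, h1, norm_neg, Finset.sum_mul]
      refine (norm_sum_le _ _).trans (Finset.sum_le_sum fun k hk => ?_)
      rw [norm_mul, norm_pow, norm_pow]
      have := (Finset.mem_range.1 hk).le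
      gcongr
    have h3 : 0 < ‖r‖ ^ n := by positivity
    have h4 := le_of_mul_le_mul_right h2 h3
    linarith
  have hcz : (starRingEnd ℂ) z ≠ 0 := by simpa using hz0
  have hid : p.eval z = q.eval z + w * (z ^ n * (starRingEnd ℂ) (q.eval (((starRingEnd ℂ) z)⁻¹))) := by
    have h1 : z ^ n * (starRingEnd ℂ) (q.eval (((starRingEnd ℂ) z)⁻¹)) =
        ∑ k ∈ Finset.range (n + 1), (starRingEnd ℂ) (c (n - k)) * z ^ k := by
      rw [hqev, map_sum, Finset.mul_sum, ← Finset.sum_range_reflect]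
      apply Finset.sum_congr rfl
      intro k hk
      have hk' : k ≤ n := by
        have := Finset.mem_range.1 hk
        omega
      have e : n + 1 - 1 - k = n - k := by omega
      rw [e, map_mul, map_pow, map_inv₀, Complex.conj_conj, inv_pow]
      have h5 : z ^ n = z ^ k * z ^ (n - k) := by rw [← pow_add]; congr 1; omega
      rw [h5]
      field_simp
    rw [h1, hqev, Finset.mul_sum, ← Finset.sum_add_distrib, eval_eq_sum_range, hdeg]
    apply Finset.sum_congr rfl
    intro k hk
    have hk' : k ≤ n := by
      have := Finset.mem_range.1 hk
      omega
    rw [hrel k hk']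
    ring
  rw [hz] at hid
  have hE : ‖q.eval z‖ = ‖z‖ ^ n * ‖q.eval (((starRingEnd ℂ) z)⁻¹)‖ := by
    have : q.eval z = -(w * (z ^ n * (starRingEnd ℂ) (q.eval (((starRingEnd ℂ) z)⁻¹)))) := by
      linear_combination -hid
    rw [this, norm_neg, norm_mul, norm_mul, hw, one_mul, norm_pow, Complex.norm_conj]
  have hzpos : 0 < ‖z‖ := norm_pos_iff.2 hz0
  have hqn : q.natDegree ≠ 0 := by omega
  rcases lt_trichotomy ‖z‖ 1 with h | h | h
  · exfalso
    have hu : 1 < ‖((starRingEnd ℂ) z)⁻¹‖ := by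
      rw [norm_inv, Complex.norm_conj]
      exact (one_lt_inv₀ hzpos).2 h
    have := aux_poly q hqn hroots _ hu
    rw [hqdeg, map_inv₀, Complex.conj_conj, inv_inv, hE, norm_inv, Complex.norm_conj,
      ← mul_assoc, ← mul_pow, inv_mul_cancel₀ hzpos.ne', one_pow, one_mul] at this
    exact lt_irrefl _ this
  · exact h
  · exfalso
    have := aux_poly q hqn hroots z h
    rw [hqdeg, hE] at this
    exact lt_irrefl _ this
end

section
/- Let p be a self-inversive polynomial over \mathbb{C} of degree n \ge 1. Then all roots of p lie on the unit circle |z| = 1 if and only if all roots of its derivative p' lie in the closed unit disk |z| \le 1. (Cohn's theorem.) -/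
open Polynomial

lemma cohn_aux_factor (z a : ℂ) (hz : 1 < ‖z‖) (ha : ‖a‖ ≤ 1) :
    ‖z‖ * ‖(starRingEnd ℂ z)⁻¹ - a‖ ≤ ‖z - a‖ := by
  have hz0 : z ≠ 0 := by
    rintro rfl
    simp at hz
    linarith
  have hc : starRingEnd ℂ z ≠ 0 := by simpa using hz0
  have h1 : ‖z‖ * ‖(starRingEnd ℂ z)⁻¹ - a‖ = ‖1 - starRingEnd ℂ z * a‖ := by
    rw [← Complex.norm_conj z, ← norm_mul, mul_sub, mul_inv_cancel₀ hc]
  rw [h1]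
  apply le_of_sq_le_sq _ (norm_nonneg _)
  have e1 : ‖z‖ ^ 2 = z.re ^ 2 + z.im ^ 2 := by
    rw [Complex.sq_norm, Complex.normSq_apply]; ring
  have e2 : ‖a‖ ^ 2 = a.re ^ 2 + a.im ^ 2 := by
    rw [Complex.sq_norm, Complex.normSq_apply]; ring
  have e3 : (1 : ℝ) ≤ ‖z‖ ^ 2 := by nlinarith
  have e4 : ‖a‖ ^ 2 ≤ 1 := by nlinarith [norm_nonneg a]
  rw [e1] at e3
  rw [e2] at e4
  rw [Complex.sq_norm, Complex.sq_norm, Complex.normSq_apply, Complex.normSq_apply]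
  simp only [Complex.sub_re, Complex.sub_im, Complex.mul_re, Complex.mul_im, Complex.one_re,
    Complex.one_im, Complex.conj_re, Complex.conj_im]
  nlinarith [mul_nonneg (sub_nonneg.2 e3) (sub_nonneg.2 e4)]

lemma cohn_aux_prod (z : ℂ) (hz : 1 < ‖z‖) (s : Multiset ℂ) (hs : ∀ a ∈ s, ‖a‖ ≤ 1) :
    ‖z‖ ^ s.card * ‖(s.map (fun a => (starRingEnd ℂ z)⁻¹ - a)).prod‖
      ≤ ‖(s.map (fun a => z - a)).prod‖ := by
  induction s using Multiset.induction_on with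
  | empty => simp
  | cons a s ih =>
    have h1 := ih (fun b hb => hs b (Multiset.mem_cons_of_mem hb))
    have h2 := cohn_aux_factor z a hz (hs a (Multiset.mem_cons_self a s))
    simp only [Multiset.card_cons, Multiset.map_cons, Multiset.prod_cons, norm_mul, pow_succ]
    calc _ = (‖z‖ * ‖(starRingEnd ℂ z)⁻¹ - a‖) *
          (‖z‖ ^ s.card * ‖(s.map (fun a => (starRingEnd ℂ z)⁻¹ - a)).prod‖) := by ring
      _ ≤ _ := by gcongr

lemma cohn_aux_eval (q : ℂ[X]) (y : ℂ) :
    q.eval y = q.leadingCoeff * (q.roots.map (fun a => y - a)).prod :=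
  (IsAlgClosed.splits q).eval_eq_prod_roots y

lemma cohn_aux_deriv (p : ℂ[X]) (n : ℕ) (hdeg : p.natDegree = n) (y : ℂ) :
    y * (derivative p).eval y = ∑ j ∈ Finset.range (n + 1), (j : ℂ) * p.coeff j * y ^ j := by
  rw [derivative_eval, sum_over_range' _ _ (n + 1) (by omega), Finset.mul_sum]
  · refine Finset.sum_congr rfl fun j _ => ?_
    rcases j with _ | j
    · simp
    · simp [pow_succ]; ring
  · simp

lemma cohn_aux_reflect (p : ℂ[X]) (n : ℕ) (w : ℂ)
    (h : ∀ j ≤ n, p.coeff j = w * (starRingEnd ℂ) (p.coeff (n - j))) (c : ℕ → ℝ)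
    (z : ℂ) (hz : z ≠ 0) :
    ∑ j ∈ Finset.range (n + 1), (c (n - j) : ℂ) * p.coeff j * z ^ j =
      w * z ^ n * starRingEnd ℂ (∑ j ∈ Finset.range (n + 1),
        (c j : ℂ) * p.coeff j * ((starRingEnd ℂ z)⁻¹) ^ j) := by
  rw [← Finset.sum_range_reflect (fun j => (c j : ℂ) * p.coeff j * ((starRingEnd ℂ z)⁻¹) ^ j),
    map_sum, Finset.mul_sum]
  refine Finset.sum_congr rfl fun j hj => ?_
  have hj' : j ≤ n := by simpa [Nat.lt_succ_iff] using hj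
  have e : n + 1 - 1 - j = n - j := by omega
  rw [e, h j hj']
  simp only [map_mul, map_pow, map_inv₀, Complex.conj_conj, Complex.conj_ofReal]
  have e2 : z ^ n = z ^ j * z ^ (n - j) := by rw [← pow_add]; congr 1; omega
  rw [e2, inv_pow]
  field_simp

lemma cohn_aux_no_big (n : ℕ) (hn : 1 ≤ n) (p : Polynomial ℂ) (hdeg : p.natDegree = n)
    (w : ℂ) (hw : ‖w‖ = 1)
    (h : ∀ j ≤ n, p.coeff j = w * (starRingEnd ℂ) (p.coeff (n - j)))
    (hd : ∀ z : ℂ, (derivative p).eval z = 0 → ‖z‖ ≤ 1)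
    (z : ℂ) (hz : p.eval z = 0) : ‖z‖ ≤ 1 := by
  by_contra! hlt
  have hz0 : z ≠ 0 := by
    rintro rfl
    simp at hlt
    linarith
  have hpos : 0 < ‖z‖ := by linarith
  have h1 := cohn_aux_reflect p n w h (fun j => (j : ℝ)) z hz0
  simp only [Complex.ofReal_natCast] at h1
  rw [← cohn_aux_deriv p n hdeg] at h1
  have h2 : ∑ j ∈ Finset.range (n + 1), ((n - j : ℕ) : ℂ) * p.coeff j * z ^ j
      = n * p.eval z - z * (derivative p).eval z := by
    rw [cohn_aux_deriv p n hdeg, eval_eq_sum_range, hdeg, Finset.mul_sum,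
      ← Finset.sum_sub_distrib]
    refine Finset.sum_congr rfl fun j hj => ?_
    have hj' : j ≤ n := by simpa [Nat.lt_succ_iff] using hj
    rw [Nat.cast_sub hj']
    ring
  rw [h2, hz] at h1
  have h3 := congrArg norm h1
  simp only [mul_zero, zero_sub, norm_neg, norm_mul, norm_pow, hw, Complex.norm_conj, norm_inv,
    one_mul] at h3
  set q := derivative p with hq
  have hqz : q.eval z ≠ 0 := fun h0 => by linarith [hd z h0]
  have hq0 : q ≠ 0 := by
    intro h0
    simp [h0] at hqz
  have hcard : q.roots.card = n - 1 := by
    rw [← (IsAlgClosed.splits q).natDegree_eq_card_roots, hq, natDegree_derivative, hdeg]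
  have h4 := cohn_aux_prod z hlt q.roots (fun a ha => hd a ((mem_roots hq0).1 ha))
  have h5 : ‖z‖ ^ (n - 1) * ‖q.eval (starRingEnd ℂ z)⁻¹‖ ≤ ‖q.eval z‖ := by
    rw [cohn_aux_eval q, cohn_aux_eval q, norm_mul, norm_mul, ← hcard]
    calc _ = ‖q.leadingCoeff‖ * (‖z‖ ^ q.roots.card *
          ‖(q.roots.map (fun a => (starRingEnd ℂ z)⁻¹ - a)).prod‖) := by ring
      _ ≤ _ := by gcongr
  have h6 : ‖z‖ ^ n = ‖z‖ ^ (n - 1) * ‖z‖ := by rw [← pow_succ]; congr 1; omega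
  have h7 : ‖z‖ * ‖q.eval z‖ = ‖z‖ ^ (n - 1) * ‖q.eval (starRingEnd ℂ z)⁻¹‖ := by
    rw [h3, h6]
    field_simp
  have h8 : 0 < ‖q.eval z‖ := norm_pos_iff.2 hqz
  nlinarith

/-- Cohn's theorem: a self-inversive polynomial of degree `n ≥ 1` has all its roots on the
unit circle iff all the roots of its derivative lie in the closed unit disk. -/
theorem stmt_13 (n : ℕ) (hn : 1 ≤ n) (p : Polynomial ℂ) (hdeg : p.natDegree = n)
    (han : p.coeff n ≠ 0)
    (hsi : ∃ w : ℂ, ‖w‖ = 1 ∧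
      ∀ j ≤ n, p.coeff j = w * (starRingEnd ℂ) (p.coeff (n - j))) :
    (∀ z : ℂ, p.eval z = 0 → ‖z‖ = 1) ↔
      (∀ z : ℂ, (derivative p).eval z = 0 → ‖z‖ ≤ 1) := by
  obtain ⟨w, hw, h⟩ := hsi
  have hp0 : p ≠ 0 := by
    rintro rfl
    simp at han
  have hdp : 0 < p.degree := natDegree_pos_iff_degree_pos.1 (by omega)
  constructor
  · intro hr z hz
    have hq0 : derivative p ≠ 0 := by
      intro h0
      have := derivative_eq_zero.1 h0
      omega
    have h1 := rootSet_derivative_subset_convexHull_rootSet hdp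
      ((mem_rootSet_of_ne hq0).2 (by simpa using hz))
    have h2 : convexHull ℝ (p.rootSet ℂ) ⊆ Metric.closedBall (0 : ℂ) 1 := by
      refine convexHull_min (fun a ha => ?_) (convex_closedBall _ _)
      have := hr a (by simpa using (mem_rootSet_of_ne hp0).1 ha)
      simp [this]
    simpa using h2 h1
  · intro hd z hz
    apply le_antisymm (cohn_aux_no_big n hn p hdeg w hw h hd z hz)
    have hw0 : w ≠ 0 := by
      rintro rfl
      simp at hw
    have hz0 : z ≠ 0 := by
      rintro rfl
      have h0 := h 0 (Nat.zero_le _)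
      rw [coeff_zero_eq_eval_zero, hz] at h0
      rw [Nat.sub_zero] at h0
      rcases mul_eq_zero.1 h0.symm with h1 | h1
      · exact hw0 h1
      · exact han ((map_eq_zero (starRingEnd ℂ)).1 h1)
    have h1 := cohn_aux_reflect p n w h (fun _ => 1) z hz0
    simp only [Complex.ofReal_one, one_mul] at h1
    have e : ∀ y, p.eval y = ∑ j ∈ Finset.range (n + 1), p.coeff j * y ^ j := by
      intro y
      rw [eval_eq_sum_range, hdeg]
    rw [← e, ← e, hz] at h1
    have h2 : p.eval (starRingEnd ℂ z)⁻¹ = 0 := by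
      have h3 := h1.symm
      simpa [hw0, hz0] using h3
    have h4 := cohn_aux_no_big n hn p hdeg w hw h hd _ h2
    rw [norm_inv, Complex.norm_conj] at h4
    exact (inv_le_one₀ (norm_pos_iff.2 hz0)).1 h4
end

section
/- (Mallows–Sloane–Duursma bound.) Let n \ge d \ge 1 be integers and let F(x,y) = x^n + \sum_{i=d}^{n} f_i x^{n-i} y^i be a homogeneous polynomial of degree n with real coefficients and f_d \neq 0, which is virtually self-dual over \mathbb{F}_q, i.e. F(x,y) = F\big((x + (q-1)y)/\sqrt{q}, (x - y)/\sqrt{q}\big) as polynomials, and which is b-divisible, i.e. f_i \neq 0 implies b \mid i. Then: if q = 2, b = 2 and 2 \mid n (Type I), then d \le 2\lfloor n/8 \rfloor + 2; if q = 2, b = 4 and 8 \mid n (Type II), then d \le 4\lfloor n/24 \rfloor + 4; if q = 3, b = 3 and 4 \mid n (Type III), then d \le 3\lfloor n/12 \rfloor + 3; and if q = 4, b = 2 and 2 \mid n (Type IV), then d \le 2\lfloor n/6 \rfloor + 2. -/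
open MvPolynomial in
/-- Directional derivative in direction `(u, v)`. -/
noncomputable def MSD.D (u v : ℂ) (P : MvPolynomial (Fin 2) ℂ) : MvPolynomial (Fin 2) ℂ :=
  C u * pderiv 0 P + C v * pderiv 1 P

open MvPolynomial in
/-- Linear substitution `x ↦ a x + b y`, `y ↦ c x + e y`. -/
noncomputable def MSD.S (a b c e : ℂ) : MvPolynomial (Fin 2) ℂ →ₐ[ℂ] MvPolynomial (Fin 2) ℂ :=
  aeval ![C a * X 0 + C b * X 1, C c * X 0 + C e * X 1]

namespace MSD
open MvPolynomial

lemma pderiv_comm' (P : MvPolynomial (Fin 2) ℂ) :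
    pderiv 1 (pderiv 0 P) = pderiv 0 (pderiv 1 P) := by
  induction P using MvPolynomial.induction_on with
  | C a => simp
  | add p q hp hq => simp [hp, hq]
  | mul_X p i hp =>
    fin_cases i <;> simp [pderiv_X, hp] <;> ring

lemma D_comm (u v u' v' : ℂ) (P : MvPolynomial (Fin 2) ℂ) :
    D u v (D u' v' P) = D u' v' (D u v P) := by
  simp only [D, map_add, Derivation.leibniz, pderiv_C, smul_eq_mul, mul_zero, add_zero,
    pderiv_comm']
  ring

lemma D_C_mul (u v k : ℂ) (P : MvPolynomial (Fin 2) ℂ) :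
    D u v (C k * P) = C k * D u v P := by
  simp only [D, Derivation.leibniz, pderiv_C, smul_eq_mul, mul_zero, add_zero]
  ring

lemma D_scale (u v k : ℂ) (P : MvPolynomial (Fin 2) ℂ) :
    D (k * u) (k * v) P = C k * D u v P := by
  simp only [D, C_mul]
  ring

lemma S_C (a b c e k : ℂ) : S a b c e (C k) = C k := by
  simp [S]

lemma D_S (a b c e u v : ℂ) (P : MvPolynomial (Fin 2) ℂ) :
    D u v (S a b c e P) = S a b c e (D (a * u + b * v) (c * u + e * v) P) := by
  induction P using MvPolynomial.induction_on with
  | C k => simp [D, S]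
  | add p q hp hq =>
    simp only [D, map_add, mul_add] at *
    linear_combination hp + hq
  | mul_X p i hp =>
    simp only [D, map_mul, map_add, S_C, Derivation.leibniz, smul_eq_mul] at *
    have key : C u * pderiv 0 (S a b c e (X i)) + C v * pderiv 1 (S a b c e (X i)) =
        S a b c e (C (a * u + b * v) * pderiv 0 (X i) + C (c * u + e * v) * pderiv 1 (X i)) := by
      fin_cases i <;> simp [S, pderiv_X] <;> ring
    simp only [map_mul, map_add, S_C] at key
    linear_combination (S a b c e (X i)) * hp + (S a b c e p) * key

/-- `P` is a multiple of the substitution of `Q`. -/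
def Rel (a b c e : ℂ) (P Q : MvPolynomial (Fin 2) ℂ) : Prop :=
  ∃ k : ℂ, P = C k * S a b c e Q

lemma Rel.step {a b c e : ℂ} {P Q : MvPolynomial (Fin 2) ℂ} (h : Rel a b c e P Q)
    (u v u' v' k : ℂ) (h1 : a * u + b * v = k * u') (h2 : c * u + e * v = k * v') :
    Rel a b c e (D u v P) (D u' v' Q) := by
  obtain ⟨m, rfl⟩ := h
  refine ⟨m * k, ?_⟩
  rw [D_C_mul, D_S, h1, h2, D_scale, map_mul, S_C, C_mul, mul_assoc]

lemma Rel.dvd {a b c e : ℂ} {G : MvPolynomial (Fin 2) ℂ} (h : Rel a b c e G G)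
    (r r' : ℂ) (k : ℕ) (hr : c - r * a = - r' * (e - r * b))
    (hG : (X 1 - C r * X 0) ^ k ∣ G) : (X 1 - C r' * X 0) ^ k ∣ G := by
  obtain ⟨m, hm⟩ := h
  have h1 := map_dvd (S a b c e) hG
  rw [hm]
  refine Dvd.dvd.mul_left (dvd_trans ?_ h1) _
  rw [map_pow]
  refine pow_dvd_pow_of_dvd ⟨C (e - r * b), ?_⟩ k
  have h2 : (C (c - r * a) : MvPolynomial (Fin 2) ℂ) = C (- r' * (e - r * b)) := by rw [hr]
  simp only [C_sub, C_mul, C_neg] at h2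
  simp only [map_sub, map_mul, S_C]
  simp [S]
  linear_combination X 0 * h2

lemma Rel.dvd_X {a b c e : ℂ} {G : MvPolynomial (Fin 2) ℂ} (h : Rel a b c e G G)
    (r : ℂ) (k : ℕ) (hr : e - r * b = 0)
    (hG : (X 1 - C r * X 0) ^ k ∣ G) : (X 0) ^ k ∣ G := by
  obtain ⟨m, hm⟩ := h
  have h1 := map_dvd (S a b c e) hG
  rw [hm]
  refine Dvd.dvd.mul_left (dvd_trans ?_ h1) _
  rw [map_pow]
  refine pow_dvd_pow_of_dvd ⟨C (c - r * a), ?_⟩ k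
  have h2 : (C (e - r * b) : MvPolynomial (Fin 2) ℂ) = 0 := by rw [hr, C_0]
  simp only [C_sub, C_mul] at h2
  simp only [map_sub, map_mul, S_C]
  simp [S]
  linear_combination X 1 * h2

/-- `P = y ^ j (k x ^ m + y K)`. -/
def Lead (P : MvPolynomial (Fin 2) ℂ) (j m : ℕ) (k : ℂ) : Prop :=
  ∃ K, P = X 1 ^ j * (C k * X 0 ^ m + X 1 * K)

lemma Lead.step {P : MvPolynomial (Fin 2) ℂ} {j m : ℕ} {k : ℂ} (h : Lead P (j + 1) m k)
    (u v : ℂ) : Lead (D u v P) j m (v * (j + 1) * k) := by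
  obtain ⟨K, rfl⟩ := h
  refine ⟨C u * (C k * pderiv 0 (X 0 ^ m) + X 1 * pderiv 0 K)
    + C v * (((j : MvPolynomial (Fin 2) ℂ) + 1) * K + K + X 1 * pderiv 1 K), ?_⟩
  simp [D, Derivation.leibniz, Derivation.leibniz_pow, pderiv_X]
  ring

lemma Lead.stepX {P : MvPolynomial (Fin 2) ℂ} {j m : ℕ} {k : ℂ} (h : Lead P j (m + 1) k) :
    Lead (D 1 0 P) j m ((m + 1) * k) := by
  obtain ⟨K, rfl⟩ := h
  refine ⟨pderiv 0 K, ?_⟩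
  simp [D, Derivation.leibniz, Derivation.leibniz_pow, pderiv_X]
  ring

lemma D_hom {P : MvPolynomial (Fin 2) ℂ} {n : ℕ} (h : P.IsHomogeneous n) (u v : ℂ) :
    (D u v P).IsHomogeneous (n - 1) :=
  (h.pderiv.C_mul u).add (h.pderiv.C_mul v)

lemma Lead.ne {P : MvPolynomial (Fin 2) ℂ} {j m : ℕ} {k : ℂ} (h : Lead P j m k) (hk : k ≠ 0) :
    aeval (![1, Polynomial.X] : Fin 2 → Polynomial ℂ) P ≠ 0 := by
  obtain ⟨K, rfl⟩ := h
  simp only [map_mul, map_pow, map_add, aeval_X]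
  simp only [Matrix.cons_val_one, Matrix.cons_val_zero, algHom_C]
  refine mul_ne_zero (by simp) ?_
  intro h0
  have := congrArg (Polynomial.eval 0) h0
  simp at this
  exact hk this

lemma deg_bound {G : MvPolynomial (Fin 2) ℂ} (T : Finset ℂ) (k N : ℕ)
    (h0 : aeval (![1, Polynomial.X] : Fin 2 → Polynomial ℂ) G ≠ 0)
    (hN : G.totalDegree ≤ N)
    (h : ∀ r ∈ T, (X 1 - C r * X 0) ^ k ∣ G) : T.card * k ≤ N := by
  have h1 : (aeval (![1, Polynomial.X] : Fin 2 → Polynomial ℂ) G).natDegree ≤ N * 1 :=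
    aeval_natDegree_le G hN _ (by intro i; fin_cases i <;> simp)
  have h2 : ∏ r ∈ T, (Polynomial.X - Polynomial.C r) ^ k ∣
      aeval (![1, Polynomial.X] : Fin 2 → Polynomial ℂ) G := by
    apply Finset.prod_dvd_of_coprime
    · intro a _ b _ hab
      exact (Polynomial.pairwise_coprime_X_sub_C Function.injective_id hab).pow
    · intro r hr
      have := map_dvd (aeval (![1, Polynomial.X] : Fin 2 → Polynomial ℂ)) (h r hr)
      simpa [map_pow, algHom_C] using this
  have h3 := Polynomial.natDegree_le_of_dvd h2 h0
  rw [Polynomial.natDegree_prod_of_monic _ _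
    (fun r _ => (Polynomial.monic_X_sub_C r).pow k)] at h3
  simp at h3
  omega

lemma deg_bound_X {G : MvPolynomial (Fin 2) ℂ} (T : Finset ℂ) (k N : ℕ)
    (h0 : aeval (![1, Polynomial.X] : Fin 2 → Polynomial ℂ) G ≠ 0)
    (hN : G.totalDegree ≤ N) (hX : X 0 ^ k ∣ G)
    (h : ∀ r ∈ T, (X 1 - C r * X 0) ^ k ∣ G) : (T.card + 1) * k ≤ N := by
  have h1 : (aeval (![1, Polynomial.X] : Fin 2 → Polynomial ℂ) G).natDegree + k ≤ N := by
    obtain ⟨H, rfl⟩ := hX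
    have hH : H ≠ 0 := by rintro rfl; simp at h0
    rw [totalDegree_mul_of_isDomain (by simp) hH, totalDegree_X_pow] at hN
    have := aeval_natDegree_le H le_rfl (![1, Polynomial.X] : Fin 2 → Polynomial ℂ)
      (n := 1) (by intro i; fin_cases i <;> simp)
    simp only [map_mul, map_pow, aeval_X]
    simp only [Matrix.cons_val_zero, one_pow, one_mul]
    omega
  have h2 : ∏ r ∈ T, (Polynomial.X - Polynomial.C r) ^ k ∣
      aeval (![1, Polynomial.X] : Fin 2 → Polynomial ℂ) G := by
    apply Finset.prod_dvd_of_coprime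
    · intro a _ b _ hab
      exact (Polynomial.pairwise_coprime_X_sub_C Function.injective_id hab).pow
    · intro r hr
      have := map_dvd (aeval (![1, Polynomial.X] : Fin 2 → Polynomial ℂ)) (h r hr)
      simpa [map_pow, algHom_C] using this
  have h3 := Polynomial.natDegree_le_of_dvd h2 h0
  rw [Polynomial.natDegree_prod_of_monic _ _
    (fun r _ => (Polynomial.monic_X_sub_C r).pow k)] at h3
  simp at h3
  linarith

/-- The weight enumerator as a bivariate polynomial over `ℂ`. -/
noncomputable def W (n d : ℕ) (f : ℕ → ℝ) : MvPolynomial (Fin 2) ℂ :=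
  X 0 ^ n + ∑ i ∈ Finset.Icc d n, C (f i : ℂ) * X 0 ^ (n - i) * X 1 ^ i

lemma W_hom (n d : ℕ) (f : ℕ → ℝ) : (W n d f).IsHomogeneous n := by
  refine (isHomogeneous_X_pow _ _).add (IsHomogeneous.sum _ _ _ fun i hi => ?_)
  have := ((isHomogeneous_X_pow (R := ℂ) (0 : Fin 2) (n - i)).C_mul (f i : ℂ)).mul
    (isHomogeneous_X_pow (R := ℂ) (1 : Fin 2) i)
  rwa [Nat.sub_add_cancel (Finset.mem_Icc.1 hi).2] at this

lemma W_lead (n d : ℕ) (f : ℕ → ℝ) (hdn : d + 1 ≤ n) :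
    Lead (D 0 1 (W n (d + 1) f)) d (n - (d + 1)) ((d + 1) * f (d + 1)) := by
  obtain ⟨K, hK⟩ : ∃ K : MvPolynomial (Fin 2) ℂ, W n (d + 1) f = X 0 ^ n +
      X 1 ^ (d + 1) * (C (f (d + 1) : ℂ) * X 0 ^ (n - (d + 1)) + X 1 * K) := by
    refine ⟨∑ i ∈ Finset.Icc (d + 2) n, C (f i : ℂ) * X 0 ^ (n - i) * X 1 ^ (i - (d + 2)), ?_⟩
    have hs : ∑ i ∈ Finset.Icc (d + 2) n, (C (f i : ℂ) * X 0 ^ (n - i) * X 1 ^ i :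
          MvPolynomial (Fin 2) ℂ) =
        X 1 ^ (d + 2) * ∑ i ∈ Finset.Icc (d + 2) n,
          C (f i : ℂ) * X 0 ^ (n - i) * X 1 ^ (i - (d + 2)) := by
      rw [Finset.mul_sum]
      refine Finset.sum_congr rfl fun i hi => ?_
      have hi' : (X 1 : MvPolynomial (Fin 2) ℂ) ^ i = X 1 ^ (d + 2) * X 1 ^ (i - (d + 2)) := by
        rw [← pow_add, Nat.add_sub_cancel' (Finset.mem_Icc.1 hi).1]
      rw [hi']
      ring
    rw [W, ← Finset.insert_Icc_add_one_left_eq_Icc hdn, Finset.sum_insert (by simp),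
      show d + 1 + 1 = d + 2 from rfl, hs]
    generalize (∑ i ∈ Finset.Icc (d + 2) n,
          (C (f i : ℂ) * X 0 ^ (n - i) * X 1 ^ (i - (d + 2)) : MvPolynomial (Fin 2) ℂ)) = Q
    ring
  obtain ⟨K', hK'⟩ := Lead.step (P := X 1 ^ (d + 1) *
    (C (f (d + 1) : ℂ) * X 0 ^ (n - (d + 1)) + X 1 * K)) ⟨_, rfl⟩ 0 1
  refine ⟨K', ?_⟩
  rw [one_mul] at hK'
  rw [hK, ← hK']
  generalize X 1 ^ (d + 1) * (C (f (d + 1) : ℂ) * X 0 ^ (n - (d + 1)) + X 1 * K) = Q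
  simp [D, Derivation.leibniz_pow, pderiv_X]

lemma W_diag (b n d : ℕ) (f : ℕ → ℝ) (hdiv : ∀ i ∈ Finset.Icc d n, f i ≠ 0 → b ∣ i)
    (z : ℂ) (hz : z ^ b = 1) : Rel 1 0 0 z (W n d f) (W n d f) := by
  refine ⟨1, ?_⟩
  simp only [W, map_add, map_sum, map_mul, map_pow, S_C, C_1, one_mul]
  simp only [S, aeval_X, Matrix.cons_val_zero, Matrix.cons_val_one, C_1, C_0, zero_mul, one_mul,
    add_zero, zero_add]
  congr 1
  refine Finset.sum_congr rfl fun i hi => ?_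
  by_cases hf : f i = 0
  · simp [hf]
  · obtain ⟨t, rfl⟩ := hdiv i hi hf
    rw [mul_pow, ← C_pow, pow_mul z, hz, one_pow, C_1, one_mul]

lemma W_mac (q n d : ℕ) (f : ℕ → ℝ)
    (hsd : ∀ x y : ℝ,
      x ^ n + ∑ i ∈ Finset.Icc d n, f i * x ^ (n - i) * y ^ i =
        ((x + ((q : ℝ) - 1) * y) / Real.sqrt q) ^ n +
          ∑ i ∈ Finset.Icc d n,
            f i * ((x + ((q : ℝ) - 1) * y) / Real.sqrt q) ^ (n - i) *
              ((x - y) / Real.sqrt q) ^ i) :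
    ∃ s : ℂ, Rel s (s * (q - 1)) s (-s) (W n d f) (W n d f) := by
  refine ⟨((Real.sqrt q)⁻¹ : ℝ), 1, ?_⟩
  rw [C_1, one_mul]
  apply funext_set (fun _ => Set.range ((↑) : ℝ → ℂ))
    (fun _ => Set.infinite_range_of_injective Complex.ofReal_injective)
  intro x hx
  obtain ⟨x0, h0⟩ := hx 0 trivial
  obtain ⟨x1, h1⟩ := hx 1 trivial
  have h := congrArg ((↑) : ℝ → ℂ) (hsd x0 x1)
  push_cast at h
  simp only [W, map_add, map_sum, map_mul, map_pow, S_C]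
  simp only [S, aeval_X, Matrix.cons_val_zero, Matrix.cons_val_one, map_add, map_mul, eval_C,
    eval_X, ← h0, ← h1]
  rw [h]
  push_cast
  congr 1
  · congr 1; ring
  · refine Finset.sum_congr rfl fun i hi => ?_
    congr 2
    · congr 1; ring
    · ring

lemma no_full (n : ℕ) (f : ℕ → ℝ) (hn : 4 ≤ n) (h2 : 2 ∣ n)
    (hsd : ∀ x y : ℝ,
      x ^ n + ∑ i ∈ Finset.Icc n n, f i * x ^ (n - i) * y ^ i =
        ((x + (((2 : ℕ) : ℝ) - 1) * y) / Real.sqrt (2 : ℕ)) ^ n +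
          ∑ i ∈ Finset.Icc n n,
            f i * ((x + (((2 : ℕ) : ℝ) - 1) * y) / Real.sqrt (2 : ℕ)) ^ (n - i) *
              ((x - y) / Real.sqrt (2 : ℕ)) ^ i) : False := by
  obtain ⟨m, rfl⟩ := h2
  have e1 := hsd 1 1
  have e2 := hsd 1 (-1)
  have hm : m ≠ 0 := by omega
  have hs : (2 / Real.sqrt 2) ^ (2 * m) = (2 : ℝ) ^ m := by
    rw [pow_mul, div_pow, Real.sq_sqrt (by norm_num)]; norm_num
  norm_num [hm, hs, pow_mul] at e1 e2
  have h4 : (2 : ℝ) ^ 2 ≤ 2 ^ m := pow_le_pow_right₀ (by norm_num) (by omega)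
  nlinarith

end MSD

namespace MSD
open MvPolynomial

lemma Lead.dvd {P : MvPolynomial (Fin 2) ℂ} {j m : ℕ} {k : ℂ} (h : Lead P j m k) :
    (X 1 - C 0 * X 0) ^ j ∣ P := by
  obtain ⟨K, rfl⟩ := h
  simp

lemma typeI (n d : ℕ) (f : ℕ → ℝ) (s : ℂ) (hdn : d + 4 < n) (hfd : f (d + 4) ≠ 0)
    (hs : Rel s s s (-s) (W n (d + 4) f) (W n (d + 4) f))
    (hz : Rel 1 0 0 (-1) (W n (d + 4) f) (W n (d + 4) f)) :
    4 * (d + 1) ≤ n - 4 := by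
  obtain ⟨m, rfl⟩ : ∃ m, n = d + 4 + (m + 1) := ⟨n - (d + 4) - 1, by omega⟩
  have hl := W_lead _ (d + 3) f hdn.le
  rw [show d + 3 + 1 = d + 4 from rfl] at hl
  have hh := D_hom (D_hom (D_hom (D_hom (W_hom (d + 4 + (m + 1)) (d + 4) f) 0 1) 1 0) 1 1) 1 (-1)
  rw [show d + 4 + (m + 1) - (d + 4) = m + 1 by omega] at hl
  have hl := (hl.stepX.step 1 1).step 1 (-1)
  have Rs := (((hs.step 0 1 1 (-1) s (by ring) (by ring)).step 1 0 1 1 s (by ring)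
    (by ring)).step 1 1 1 0 (2 * s) (by ring) (by ring)).step 1 (-1) 0 1 (2 * s)
    (by ring) (by ring)
  have Rz := (((hz.step 0 1 0 1 (-1) (by ring) (by ring)).step 1 0 1 0 1 (by ring)
    (by ring)).step 1 1 1 (-1) 1 (by ring) (by ring)).step 1 (-1) 1 1 1
    (by ring) (by ring)
  have p1 : ∀ P, D 0 1 (D 1 0 (D 1 1 (D 1 (-1) P))) = D 1 (-1) (D 1 1 (D 1 0 (D 0 1 P))) := by
    intro P; simp only [D_comm]
  have p2 : ∀ P, D 1 1 (D 1 (-1) (D 1 0 (D 0 1 P))) = D 1 (-1) (D 1 1 (D 1 0 (D 0 1 P))) := by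
    intro P; simp only [D_comm]
  rw [p1] at Rs
  rw [p2] at Rz
  have d0 := hl.dvd
  have d1 := Rs.dvd 0 1 _ (by ring) d0
  have d2 := Rz.dvd 1 (-1) _ (by ring) d1
  have dX := Rs.dvd_X (-1) _ (by ring) d2
  have hne := hl.ne (by
    have h1 : ((d : ℂ) + 3 + 1) ≠ 0 := by norm_cast
    have h2 : ((d : ℂ) + 2 + 1) ≠ 0 := by norm_cast
    have h3 : ((d : ℂ) + 1 + 1) ≠ 0 := by norm_cast
    have h4 : ((m : ℂ) + 1) ≠ 0 := by norm_cast
    push_cast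
    repeat' apply mul_ne_zero
    all_goals first | assumption | exact_mod_cast hfd | simp [Complex.I_ne_zero])
  have := deg_bound_X {0, 1, -1} _ _ hne hh.totalDegree_le dX (by
    intro r hr
    simp only [Finset.mem_insert, Finset.mem_singleton] at hr
    rcases hr with rfl | rfl | rfl
    exacts [d0, d1, d2])
  have hc : ({0, 1, -1} : Finset ℂ).card = 3 := by
    rw [Finset.card_eq_three]
    exact ⟨_, _, _, by norm_num, by norm_num, by norm_num, rfl⟩
  rw [hc] at this
  omega

lemma typeII (n d : ℕ) (f : ℕ → ℝ) (s : ℂ) (hdn : d + 6 < n) (hfd : f (d + 6) ≠ 0)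
    (hs : Rel s s s (-s) (W n (d + 6) f) (W n (d + 6) f))
    (hz : Rel 1 0 0 Complex.I (W n (d + 6) f) (W n (d + 6) f)) :
    6 * (d + 1) ≤ n - 6 := by
  obtain ⟨m, rfl⟩ : ∃ m, n = d + 6 + (m + 1) := ⟨n - (d + 6) - 1, by omega⟩
  have hI := Complex.I_mul_I
  have hl := W_lead _ (d + 5) f hdn.le
  rw [show d + 5 + 1 = d + 6 from rfl] at hl
  have hh := D_hom (D_hom (D_hom (D_hom (D_hom (D_hom (W_hom (d + 6 + (m + 1)) (d + 6) f)
    0 1) 1 0) 1 1) 1 (-1)) 1 Complex.I) 1 (-Complex.I)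
  rw [show d + 6 + (m + 1) - (d + 6) = m + 1 by omega] at hl
  have hl := (((hl.stepX.step 1 1).step 1 (-1)).step 1 Complex.I).step 1 (-Complex.I)
  have Rs := (((((hs.step 0 1 1 (-1) s (by ring) (by ring)).step 1 0 1 1 s (by ring)
    (by ring)).step 1 1 1 0 (2 * s) (by ring) (by ring)).step 1 (-1) 0 1 (2 * s)
    (by ring) (by ring)).step 1 Complex.I 1 (-Complex.I) (s * (1 + Complex.I))
    (by ring) (by linear_combination s * hI)).step 1 (-Complex.I) 1 Complex.I
    (s * (1 - Complex.I)) (by ring) (by linear_combination s * hI)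
  have Rz := (((((hz.step 0 1 0 1 Complex.I (by ring) (by ring)).step 1 0 1 0 1 (by ring)
    (by ring)).step 1 1 1 Complex.I 1 (by ring) (by ring)).step 1 (-1) 1 (-Complex.I) 1
    (by ring) (by ring)).step 1 Complex.I 1 (-1) 1 (by ring)
    (by linear_combination hI)).step 1 (-Complex.I) 1 1 1 (by ring)
    (by linear_combination -hI)
  have p1 : ∀ P, D 1 Complex.I (D 1 (-Complex.I) (D 0 1 (D 1 0 (D 1 1 (D 1 (-1) P))))) =
      D 1 (-Complex.I) (D 1 Complex.I (D 1 (-1) (D 1 1 (D 1 0 (D 0 1 P))))) := by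
    intro P; simp only [D_comm]
  have p2 : ∀ P, D 1 1 (D 1 (-1) (D 1 (-Complex.I) (D 1 Complex.I (D 1 0 (D 0 1 P))))) =
      D 1 (-Complex.I) (D 1 Complex.I (D 1 (-1) (D 1 1 (D 1 0 (D 0 1 P))))) := by
    intro P; simp only [D_comm]
  rw [p1] at Rs
  rw [p2] at Rz
  have d0 := hl.dvd
  have d1 := Rs.dvd 0 1 _ (by ring) d0
  have d2 := Rz.dvd 1 (-Complex.I) _ (by linear_combination -hI) d1
  have d3 := Rz.dvd (-Complex.I) (-1) _ (by ring) d2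
  have d4 := Rz.dvd (-1) Complex.I _ (by linear_combination hI) d3
  have dX := Rs.dvd_X (-1) _ (by ring) d3
  have hne := hl.ne (by
    have h1 : ((d : ℂ) + 5 + 1) ≠ 0 := by norm_cast
    have h2 : ((d : ℂ) + 4 + 1) ≠ 0 := by norm_cast
    have h3 : ((d : ℂ) + 3 + 1) ≠ 0 := by norm_cast
    have h4 : ((m : ℂ) + 1) ≠ 0 := by norm_cast
    have h5 : ((d : ℂ) + 2 + 1) ≠ 0 := by norm_cast
    have h6 : ((d : ℂ) + 1 + 1) ≠ 0 := by norm_cast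
    push_cast
    repeat' apply mul_ne_zero
    all_goals first | assumption | exact_mod_cast hfd | simp [Complex.I_ne_zero])
  have := deg_bound_X {0, 1, -1, Complex.I, -Complex.I} _ _ hne hh.totalDegree_le dX (by
    intro r hr
    simp only [Finset.mem_insert, Finset.mem_singleton] at hr
    rcases hr with rfl | rfl | rfl | rfl | rfl
    exacts [d0, d1, d3, d4, d2])
  have hc : ({0, 1, -1, Complex.I, -Complex.I} : Finset ℂ).card = 5 := by
    rw [Finset.card_insert_of_notMem, Finset.card_insert_of_notMem,
      Finset.card_insert_of_notMem, Finset.card_insert_of_notMem, Finset.card_singleton] <;>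
      simp [Complex.ext_iff] <;> norm_num
  rw [hc] at this
  omega

lemma typeIII (n d : ℕ) (f : ℕ → ℝ) (s w : ℂ) (hw : w ^ 2 + w + 1 = 0)
    (hdn : d + 4 ≤ n) (hfd : f (d + 4) ≠ 0)
    (hs : Rel s (s * 2) s (-s) (W n (d + 4) f) (W n (d + 4) f))
    (hz : Rel 1 0 0 w (W n (d + 4) f) (W n (d + 4) f)) :
    4 * d ≤ n - 4 := by
  have hl := W_lead _ (d + 3) f hdn
  rw [show d + 3 + 1 = d + 4 from rfl] at hl
  have hh := D_hom (D_hom (D_hom (D_hom (W_hom n (d + 4) f) 0 1) 2 (-1)) 2 (-w)) 2 (-w ^ 2)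
  have hl := ((hl.step 2 (-1)).step 2 (-w)).step 2 (-w ^ 2)
  have Rs := (((hs.step 0 1 2 (-1) s (by ring) (by ring)).step 2 (-1) 0 1 (3 * s) (by ring)
    (by ring)).step 2 (-w) 2 (-w ^ 2) (s * (1 - w)) (by ring)
    (by linear_combination s * (2 - w) * hw)).step 2 (-w ^ 2) 2 (-w) (s * (1 - w ^ 2))
    (by ring) (by linear_combination s * (2 - w) * hw)
  have Rz := (((hz.step 0 1 0 1 w (by ring) (by ring)).step 2 (-1) 2 (-w) 1 (by ring)
    (by ring)).step 2 (-w) 2 (-w ^ 2) 1 (by ring) (by ring)).step 2 (-w ^ 2) 2 (-1) 1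
    (by ring) (by linear_combination (1 - w) * hw)
  have p1 : ∀ P, D 2 (-w) (D 2 (-w ^ 2) (D 0 1 (D 2 (-1) P))) =
      D 2 (-w ^ 2) (D 2 (-w) (D 2 (-1) (D 0 1 P))) := by
    intro P; simp only [D_comm]
  have p2 : ∀ P, D 2 (-1) (D 2 (-w ^ 2) (D 2 (-w) (D 0 1 P))) =
      D 2 (-w ^ 2) (D 2 (-w) (D 2 (-1) (D 0 1 P))) := by
    intro P; simp only [D_comm]
  rw [p1] at Rs
  rw [p2] at Rz
  have hw0 : w ≠ 0 := by rintro rfl; norm_num at hw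
  have hw1 : w ≠ 1 := by rintro rfl; norm_num at hw
  have d0 := hl.dvd
  have d1 := Rs.dvd 0 1 _ (by ring) d0
  have d2 := Rz.dvd 1 (w ^ 2) _ (by linear_combination (w - 1) * hw) d1
  have d3 := Rz.dvd (w ^ 2) w _ (by ring) d2
  have hne := hl.ne (by
    have h1 : ((d : ℂ) + 3 + 1) ≠ 0 := by norm_cast
    have h2 : ((d : ℂ) + 2 + 1) ≠ 0 := by norm_cast
    have h3 : ((d : ℂ) + 1 + 1) ≠ 0 := by norm_cast
    have h4 : ((d : ℂ) + 1) ≠ 0 := by norm_cast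
    push_cast
    repeat' apply mul_ne_zero
    all_goals first | assumption | exact_mod_cast hfd | simp [hw0])
  have := deg_bound {0, 1, w, w ^ 2} _ _ hne hh.totalDegree_le (by
    intro r hr
    simp only [Finset.mem_insert, Finset.mem_singleton] at hr
    rcases hr with rfl | rfl | rfl | rfl
    exacts [d0, d1, d3, d2])
  have hw2 : w ^ 2 ≠ 1 := by
    intro h
    have h2 : w = -2 := by linear_combination hw - h
    rw [h2] at h
    norm_num at h
  have hw3 : w ≠ w ^ 2 := by
    intro h
    apply hw1
    have : w * (w - 1) = 0 := by linear_combination -h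
    rcases mul_eq_zero.1 this with h | h
    · exact absurd h hw0
    · linear_combination h
  have hc : ({0, 1, w, w ^ 2} : Finset ℂ).card = 4 := by
    rw [Finset.card_insert_of_notMem, Finset.card_insert_of_notMem,
      Finset.card_insert_of_notMem, Finset.card_singleton]
    · simpa using hw3
    · simp [hw1.symm, hw2.symm]
    · simp [hw0.symm, (pow_ne_zero 2 hw0).symm]
  rw [hc] at this
  omega

lemma typeIV (n d : ℕ) (f : ℕ → ℝ) (s : ℂ) (hdn : d + 3 ≤ n) (hfd : f (d + 3) ≠ 0)
    (hs : Rel s (s * 3) s (-s) (W n (d + 3) f) (W n (d + 3) f))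
    (hz : Rel 1 0 0 (-1) (W n (d + 3) f) (W n (d + 3) f)) :
    3 * d ≤ n - 3 := by
  have hl := W_lead _ (d + 2) f hdn
  rw [show d + 2 + 1 = d + 3 from rfl] at hl
  have hh := D_hom (D_hom (D_hom (W_hom n (d + 3) f) 0 1) 3 1) 3 (-1)
  have hl := (hl.step 3 1).step 3 (-1)
  have Rs := ((hs.step 0 1 3 (-1) s (by ring) (by ring)).step 3 1 3 1 (2 * s) (by ring)
    (by ring)).step 3 (-1) 0 1 (4 * s) (by ring) (by ring)
  have Rz := ((hz.step 0 1 0 1 (-1) (by ring) (by ring)).step 3 1 3 (-1) 1 (by ring)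
    (by ring)).step 3 (-1) 3 1 1 (by ring) (by ring)
  have p1 : ∀ P, D 0 1 (D 3 1 (D 3 (-1) P)) = D 3 (-1) (D 3 1 (D 0 1 P)) := by
    intro P; simp only [D_comm]
  have p2 : ∀ P, D 3 1 (D 3 (-1) (D 0 1 P)) = D 3 (-1) (D 3 1 (D 0 1 P)) := by
    intro P; simp only [D_comm]
  rw [p1] at Rs
  rw [p2] at Rz
  have d0 := hl.dvd
  have d1 := Rs.dvd 0 1 _ (by ring) d0
  have d2 := Rz.dvd 1 (-1) _ (by ring) d1
  have hne := hl.ne (by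
    have h2 : ((d : ℂ) + 2 + 1) ≠ 0 := by norm_cast
    have h3 : ((d : ℂ) + 1 + 1) ≠ 0 := by norm_cast
    have h4 : ((d : ℂ) + 1) ≠ 0 := by norm_cast
    push_cast
    repeat' apply mul_ne_zero
    all_goals first | assumption | exact_mod_cast hfd | simp)
  have := deg_bound {0, 1, -1} _ _ hne hh.totalDegree_le (by
    intro r hr
    simp only [Finset.mem_insert, Finset.mem_singleton] at hr
    rcases hr with rfl | rfl | rfl
    exacts [d0, d1, d2])
  have hc : ({0, 1, -1} : Finset ℂ).card = 3 := by
    rw [Finset.card_eq_three]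
    exact ⟨_, _, _, by norm_num, by norm_num, by norm_num, rfl⟩
  rw [hc] at this
  omega

end MSD


/-- Mallows–Sloane–Duursma bound.  Let `F(x,y) = xⁿ + ∑_{i=d}^{n} fᵢ x^{n-i} yⁱ` (with
`f_d ≠ 0`) be a `b`-divisible virtually self-dual weight enumerator over `𝔽_q`, i.e. `F` is
invariant under the MacWilliams transform
`(x, y) ↦ ((x + (q-1)y)/√q, (x - y)/√q)`.  Then the bounds on the minimum distance `d`
for Types I–IV hold. -/
theorem stmt_19 (q b n d : ℕ) (f : ℕ → ℝ) (hd : 1 ≤ d) (hdn : d ≤ n) (hfd : f d ≠ 0)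
    (hsd : ∀ x y : ℝ,
      x ^ n + ∑ i ∈ Finset.Icc d n, f i * x ^ (n - i) * y ^ i =
        ((x + ((q : ℝ) - 1) * y) / Real.sqrt q) ^ n +
          ∑ i ∈ Finset.Icc d n,
            f i * ((x + ((q : ℝ) - 1) * y) / Real.sqrt q) ^ (n - i) *
              ((x - y) / Real.sqrt q) ^ i)
    (hdiv : ∀ i ∈ Finset.Icc d n, f i ≠ 0 → b ∣ i) :
    (q = 2 ∧ b = 2 ∧ 2 ∣ n → d ≤ 2 * (n / 8) + 2) ∧
    (q = 2 ∧ b = 4 ∧ 8 ∣ n → d ≤ 4 * (n / 24) + 4) ∧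
    (q = 3 ∧ b = 3 ∧ 4 ∣ n → d ≤ 3 * (n / 12) + 3) ∧
    (q = 4 ∧ b = 2 ∧ 2 ∣ n → d ≤ 2 * (n / 6) + 2) := by

  have hbd : b ∣ d := hdiv d (Finset.mem_Icc.2 ⟨le_rfl, hdn⟩) hfd
  obtain ⟨s, hs⟩ := MSD.W_mac q n d f hsd
  refine ⟨?_, ?_, ?_, ?_⟩
  · rintro ⟨rfl, rfl, hn⟩
    by_contra hcon
    have hlt : d < n := by
      rcases hdn.lt_or_eq with h | rfl
      · exact h
      · exact (MSD.no_full d f (by omega) hn hsd).elim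
    obtain ⟨e, rfl⟩ : ∃ e, d = e + 4 := ⟨d - 4, by omega⟩
    have := MSD.typeI n e f s hlt hfd (by convert hs using 1; push_cast; ring)
      (MSD.W_diag 2 n _ f hdiv (-1) (by norm_num))
    omega
  · rintro ⟨rfl, rfl, hn⟩
    by_contra hcon
    have hlt : d < n := by
      rcases hdn.lt_or_eq with h | rfl
      · exact h
      · exact (MSD.no_full d f (by omega) (by omega) hsd).elim
    obtain ⟨e, rfl⟩ : ∃ e, d = e + 6 := ⟨d - 6, by omega⟩
    have := MSD.typeII n e f s hlt hfd (by convert hs using 1; push_cast; ring)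
      (MSD.W_diag 4 n _ f hdiv Complex.I Complex.I_pow_four)
    omega
  · rintro ⟨rfl, rfl, hn⟩
    by_contra hcon
    obtain ⟨e, rfl⟩ : ∃ e, d = e + 4 := ⟨d - 4, by omega⟩
    obtain ⟨w, hw⟩ : ∃ w : ℂ, w ^ 2 + w + 1 = 0 := by
      obtain ⟨r, hr⟩ := IsAlgClosed.exists_pow_nat_eq (-3 : ℂ) (n := 2) (by norm_num)
      exact ⟨(r - 1) / 2, by linear_combination hr / 4⟩
    have := MSD.typeIII n e f s w hw hdn hfd
      (by convert hs using 1; push_cast; ring)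
      (MSD.W_diag 3 n _ f hdiv w (by linear_combination (w - 1) * hw))
    omega
  · rintro ⟨rfl, rfl, hn⟩
    by_contra hcon
    obtain ⟨e, rfl⟩ : ∃ e, d = e + 3 := ⟨d - 3, by omega⟩
    have := MSD.typeIV n e f s hdn hfd (by convert hs using 1; push_cast; ring)
      (MSD.W_diag 2 n _ f hdiv (-1) (by norm_num))
    omega
end
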